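/- arXiv:2103.04012 — 4 statements merged into one kernel-verified Lean document; each statement's English description precedes it below -/
import Mathlib

section
/- Let K be a compact Hausdorff space, X a complex Banach space, and S an X-valued function space over a uniform algebra on K with base algebra A := {x* ∘ f : f ∈ S, x* ∈ X*}, satisfying in addition A⊗X ⊆ S. Let Γ ⊆ K be a closed boundary for A in which the set of strong boundary points of A is dense (these properties hold for the Shilov boundary of A). If f ∈ S has ‖f‖ = 1 and there exists a limit point t₀ of Γ (i.e., t₀ ∈ Γ and every neighborhood of t₀ meets Γ∖{t₀}) with ‖f(t₀)‖_X = 1, then f is a Daugavet point of S: for every ε > 0 the closed unit ball B_S equals the closed convex hull of Δ_ε(f) = {g ∈ B_S : ‖f − g‖ ≥ 2 − ε}. -/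
set_option maxHeartbeats 1000000
set_option synthInstance.maxHeartbeats 1000000

/-- `t₀` is a strong boundary point for the algebra `A ⊆ C(K,ℂ)`. -/
def IsStrongBoundaryPoint {K : Type*} [TopologicalSpace K] [CompactSpace K]
    (A : Subalgebra ℂ C(K, ℂ)) (t₀ : K) : Prop :=
  ∀ U : Set K, IsOpen U → t₀ ∈ U →
    ∃ h ∈ A, h t₀ = 1 ∧ ‖h‖ = 1 ∧ ∃ c : ℝ, c < 1 ∧ ∀ t ∉ U, ‖h t‖ ≤ c

/-!
Let `g` be in the unit ball of `S`. Near the limit point `t₀` there are arbitrarily many strong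
boundary points `s`, with pairwise disjoint neighbourhoods `U s`. For each of them, `A` contains a
function `h` with `h s = 1`, small off `U s`, whose values `z` almost satisfy `‖1 - z‖ + ‖z‖ = 1`;
hence `(1 - h) • g + h • (-f t₀)` is, up to a small rescaling, in the unit ball. It is close to `g`
off `U s`, and it is close to `-f t₀` at `s`, which puts it at distance almost `2` from `f`. At
every point of `K` all but at most one of these perturbations are close to `g`, so their average is
uniformly close to `g`.
-/

section Daugavet

variable {E : Type*} [SeminormedAddCommGroup E] [NormedSpace ℝ E]

/-- `f` is a Daugavet point of `E`: for every `ε > 0`, the closed unit ball is the closed convex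
hull of its elements at distance at least `2 - ε` from `f`. The usual normalization `‖f‖ = 1` is
not part of the definition. -/
def IsDaugavetPoint (f : E) : Prop :=
  ∀ ε > (0 : ℝ), Metric.closedBall (0 : E) 1 =
    closure (convexHull ℝ {g : E | ‖g‖ ≤ 1 ∧ 2 - ε ≤ ‖f - g‖})

lemma average_mem_convexHull {ι : Type*} {F : Finset ι} (hF : F.Nonempty) {G : ι → E}
    {D : Set E} (hG : ∀ i ∈ F, G i ∈ D) : (F.card : ℝ)⁻¹ • ∑ i ∈ F, G i ∈ convexHull ℝ D := by
  have hcard : (F.card : ℝ) ≠ 0 := Nat.cast_ne_zero.2 hF.card_pos.ne'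
  rw [Finset.smul_sum]
  exact (convex_convexHull ℝ D).sum_mem (fun _ _ => by positivity) (by simp [hcard])
    fun i hi => subset_convexHull ℝ D (hG i hi)

lemma norm_sub_average {ι : Type*} {F : Finset ι} (hF : F.Nonempty) (g : E) (G : ι → E) :
    ‖g - (F.card : ℝ)⁻¹ • ∑ i ∈ F, G i‖ = (F.card : ℝ)⁻¹ * ‖∑ i ∈ F, (g - G i)‖ := by
  have hcard : (F.card : ℝ) ≠ 0 := Nat.cast_ne_zero.2 hF.card_pos.ne'
  have hsum : ∑ i ∈ F, (g - G i) = (F.card : ℝ) • g - ∑ i ∈ F, G i := by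
    rw [Finset.sum_sub_distrib, Finset.sum_const, Nat.cast_smul_eq_nsmul]
  rw [hsum, ← norm_smul_of_nonneg (by positivity), smul_sub, inv_smul_smul₀ hcard]

lemma isDaugavetPoint_of_forall_exists_average {ι : Type*} {f : E}
    (H : ∀ ε > (0 : ℝ), ∀ g : E, ‖g‖ ≤ 1 → ∃ F : Finset ι, F.Nonempty ∧ ∃ G : ι → E,
      (∀ i ∈ F, ‖G i‖ ≤ 1 ∧ 2 - ε ≤ ‖f - G i‖) ∧ ‖∑ i ∈ F, (g - G i)‖ < F.card * ε) :
    IsDaugavetPoint f := by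
  intro ε hε
  refine Set.Subset.antisymm (fun g hg => Metric.mem_closure_iff.2 fun η hη => ?_)
    (closure_minimal (convexHull_min (fun g hg => mem_closedBall_zero_iff.2 hg.1)
      (convex_closedBall 0 1)) Metric.isClosed_closedBall)
  obtain ⟨F, hF, G, hG, hsum⟩ := H (min ε η) (lt_min hε hη) g (mem_closedBall_zero_iff.1 hg)
  refine ⟨(F.card : ℝ)⁻¹ • ∑ i ∈ F, G i, average_mem_convexHull hF fun i hi =>
    ⟨(hG i hi).1, (sub_le_sub_left (min_le_left ε η) 2).trans (hG i hi).2⟩, ?_⟩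
  rw [dist_eq_norm, norm_sub_average hF]
  have hcard : (0 : ℝ) < F.card := Nat.cast_pos.2 hF.card_pos
  exact ((inv_mul_lt_iff₀ hcard).2 hsum).trans_le (min_le_right ε η)

lemma exists_norm_le_one_norm_sub_le {x : E} {δ : ℝ} (hδ : 0 ≤ δ) (hx : ‖x‖ ≤ 1 + δ) :
    ∃ y : E, ‖y‖ ≤ 1 ∧ ‖x - y‖ ≤ δ := by
  have hpos : 0 < 1 + δ := by positivity
  have hy : ‖(1 + δ)⁻¹ • x‖ ≤ 1 := by
    rwa [norm_smul_of_nonneg (by positivity), inv_mul_le_iff₀ hpos, mul_one]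
  refine ⟨(1 + δ)⁻¹ • x, hy, ?_⟩
  calc ‖x - (1 + δ)⁻¹ • x‖ = ‖δ • (1 + δ)⁻¹ • x‖ := by
        congr 1
        nth_rewrite 1 [← smul_inv_smul₀ hpos.ne' x]
        module
    _ = δ * ‖(1 + δ)⁻¹ • x‖ := norm_smul_of_nonneg hδ _
    _ ≤ δ := mul_le_of_le_one_right hδ hy

lemma two_sub_le_norm_sub {x y z : E} {η : ℝ} (hz : ‖z‖ = 1) (hx : ‖x - z‖ ≤ η)
    (hy : ‖y - -z‖ ≤ η) : 2 - 2 * η ≤ ‖x - y‖ := by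
  have htwo : ‖z - -z‖ = 2 := by
    rw [sub_neg_eq_add, ← two_smul ℝ, norm_smul_of_nonneg zero_le_two, hz, mul_one]
  linarith [norm_sub_le_norm_sub_add_norm_sub z x (-z), norm_sub_rev x z,
    norm_sub_le_norm_sub_add_norm_sub x y (-z)]

end Daugavet

lemma accPt_principal_of_subset_closure {Y : Type*} [TopologicalSpace Y] [T1Space Y] {C D : Set Y}
    {y : Y} (hCD : C ⊆ closure D) (hy : AccPt y (Filter.principal C)) :
    AccPt y (Filter.principal D) := by
  have hclosure : y ∈ derivedSet (closure D) := hy.mono (Filter.principal_mono.2 hCD)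
  rwa [derivedSet_closure] at hclosure

section FunctionSpaces

open scoped Topology

variable {K : Type*} [TopologicalSpace K] [CompactSpace K]
  {𝕜 : Type*} [RCLike 𝕜] {X : Type*} [SeminormedAddCommGroup X]

lemma norm_sum_le_of_pairwiseDisjoint {ι : Type*} {F : Finset ι} {U : ι → Set K}
    (hU : (F : Set ι).PairwiseDisjoint U) {d : ι → C(K, X)} {M η : ℝ} (hM : 0 ≤ M) (hη : 0 ≤ η)
    (hd : ∀ i ∈ F, ‖d i‖ ≤ M) (hoff : ∀ i ∈ F, ∀ t ∉ U i, ‖d i t‖ ≤ η) :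
    ‖∑ i ∈ F, d i‖ ≤ M + F.card * η := by
  classical
  refine (ContinuousMap.norm_le _ (by positivity)).2 fun t => ?_
  have hterm : ∀ i ∈ F, ‖d i t‖ ≤ (if t ∈ U i then M else 0) + η := by
    intro i hi
    split_ifs with ht
    · exact ((d i).norm_coe_le_norm t).trans ((hd i hi).trans (le_add_of_nonneg_right hη))
    · simpa using hoff i hi t ht
  have hcard : ({i ∈ F | t ∈ U i}.card : ℝ) ≤ 1 := by
    refine Nat.cast_le_one.2 (Finset.card_le_one.2 fun i hi j hj => ?_)
    rw [Finset.mem_filter] at hi hj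
    exact hU.elim_set hi.1 hj.1 t hi.2 hj.2
  calc ‖(∑ i ∈ F, d i) t‖ = ‖∑ i ∈ F, d i t‖ := by rw [ContinuousMap.sum_apply]
    _ ≤ ∑ i ∈ F, ((if t ∈ U i then M else 0) + η) := norm_sum_le_of_le F hterm
    _ = {i ∈ F | t ∈ U i}.card * M + F.card * η := by
        rw [Finset.sum_add_distrib, ← Finset.sum_filter]
        simp only [Finset.sum_const, nsmul_eq_mul]
    _ ≤ M + F.card * η := by gcongr; exact mul_le_of_le_one_left hM hcard

/-- `A` peaks at `s`: it contains functions of norm at most `1` that take the value `1` at `s` and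
are arbitrarily small off any given neighbourhood of `s`. For a subalgebra of `C(K, ℂ)` this follows
from `IsStrongBoundaryPoint`, but it makes sense for any linear space of scalar functions. -/
def PeaksAt (A : Submodule 𝕜 C(K, 𝕜)) (s : K) : Prop :=
  ∀ U ∈ 𝓝 s, ∀ η > (0 : ℝ), ∃ h ∈ A, h s = 1 ∧ ‖h‖ ≤ 1 ∧ ∀ t ∉ U, ‖h t‖ ≤ η

lemma IsStrongBoundaryPoint.peaksAt {A : Subalgebra ℂ C(K, ℂ)} {s : K}
    (hs : IsStrongBoundaryPoint A s) : PeaksAt A.toSubmodule s := by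
  intro U hU η hη
  obtain ⟨V, hVU, hV, hsV⟩ := mem_nhds_iff.1 hU
  obtain ⟨h, hA, hs1, hnorm, c, hc, hoff⟩ := hs V hV hsV
  obtain ⟨k, hk⟩ := exists_pow_lt_of_lt_one hη (max_lt hc zero_lt_one)
  refine ⟨h ^ k, A.pow_mem hA k, by simp [hs1], ?_, fun t ht => ?_⟩
  · refine (ContinuousMap.norm_le _ zero_le_one).2 fun t => ?_
    rw [ContinuousMap.pow_apply, norm_pow]
    exact pow_le_one₀ (norm_nonneg _) (hnorm ▸ h.norm_coe_le_norm t)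
  · rw [ContinuousMap.pow_apply, norm_pow]
    have hbase : ‖h t‖ ≤ max c 0 := (hoff t (mt (@hVU t) ht)).trans (le_max_left c 0)
    exact (pow_le_pow_left₀ (norm_nonneg _) hbase k).trans hk.le

variable {A : Submodule 𝕜 C(K, 𝕜)} {s : K}

lemma norm_natCast_add_one_sub_add_norm_le {m : ℕ} {z w : 𝕜} {η b : ℝ} (hη : 0 ≤ η) (hb : 4 ≤ b)
    (hz : ‖m - z‖ + ‖z‖ ≤ m + b) (hw : ‖w‖ ≤ 1) (hzw : ‖m - z‖ ≤ 1 ∨ ‖w‖ ≤ η) :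
    ‖(m + 1 : 𝕜) - (z + w)‖ + ‖z + w‖ ≤ m + 1 + (b + 2 * η) := by
  have hadd : ‖z + w‖ ≤ ‖z‖ + ‖w‖ := norm_add_le z w
  have hsub : ‖(m + 1 : 𝕜) - (z + w)‖ ≤ ‖m - z‖ + (1 + ‖w‖) := by
    rw [add_sub_add_comm]
    exact norm_add_le_of_le le_rfl (norm_sub_le_of_le norm_one.le le_rfl)
  rcases hzw with hnear | hsmall
  · have hz' : ‖z‖ ≤ ‖(m : 𝕜)‖ + ‖m - z‖ := norm_le_norm_add_norm_sub _ _
    rw [RCLike.norm_natCast] at hz'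
    linarith
  · linarith

/- `H` is a sum of `m` peak functions, each at most `η` wherever the sum of the previous ones is not
within `1` of its value at `s`. Thus, up to errors `η`, only values near the end of the segment
`[0, m]` get prolonged, which keeps the values of `H` within a bounded distance of this segment. -/
lemma PeaksAt.exists_eq_natCast_norm_sub_add_norm_le (hs : PeaksAt A s) {U : Set K}
    (hU : U ∈ 𝓝 s) {η : ℝ} (hη : 0 < η) (m : ℕ) :
    ∃ H ∈ A, H s = m ∧ (∀ t, ‖m - H t‖ + ‖H t‖ ≤ m + 4 + 2 * m * η) ∧
      ∀ t ∉ U, ‖H t‖ ≤ m * η := by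
  induction m with
  | zero => exact ⟨0, A.zero_mem, by simp⟩
  | succ m ih =>
    obtain ⟨H, hA, hHs, hH, hHoff⟩ := ih
    have hV : {t | ‖m - H t‖ < 1} ∈ 𝓝 s :=
      (isOpen_lt (by fun_prop) continuous_const).mem_nhds (by simp [hHs])
    obtain ⟨p, hpA, hps, hp, hpoff⟩ := hs _ (Filter.inter_mem hU hV) η hη
    have hp1 (t : K) : ‖p t‖ ≤ 1 := (p.norm_coe_le_norm t).trans hp
    refine ⟨H + p, A.add_mem hA hpA, by simp [hHs, hps], fun t => ?_, fun t ht => ?_⟩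
    · have hmajor : (0 : ℝ) ≤ 2 * m * η := by positivity
      have hcases : ‖m - H t‖ ≤ 1 ∨ ‖p t‖ ≤ η := by
        by_cases ht : t ∈ U ∩ {t | ‖m - H t‖ < 1}
        · exact .inl ht.2.le
        · exact .inr (hpoff t ht)
      rw [ContinuousMap.add_apply, Nat.cast_succ, Nat.cast_succ]
      linarith [norm_natCast_add_one_sub_add_norm_le hη.le (b := 4 + 2 * m * η) (by linarith)
        ((hH t).trans_eq (add_assoc _ _ _)) (hp1 t) hcases]
    · calc ‖(H + p) t‖ ≤ m * η + η :=
            norm_add_le_of_le (hHoff t ht) (hpoff t (mt And.left ht))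
        _ = (m + 1 : ℕ) * η := by push_cast; ring

lemma PeaksAt.exists_eq_one_norm_sub_add_norm_le (hs : PeaksAt A s) {U : Set K} (hU : U ∈ 𝓝 s)
    {δ : ℝ} (hδ : 0 < δ) :
    ∃ h ∈ A, h s = 1 ∧ (∀ t, ‖1 - h t‖ + ‖h t‖ ≤ 1 + δ) ∧ ∀ t ∉ U, ‖h t‖ ≤ δ := by
  obtain ⟨m, hm⟩ := exists_nat_gt (8 / δ)
  have hm0 : (0 : ℝ) < m := lt_trans (by positivity) hm
  have hmne : (m : 𝕜) ≠ 0 := Nat.cast_ne_zero.2 (Nat.cast_pos.1 hm0).ne'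
  rw [div_lt_iff₀ hδ] at hm
  obtain ⟨H, hA, hHs, hH, hHoff⟩ :=
    hs.exists_eq_natCast_norm_sub_add_norm_le hU (η := δ / 4) (by positivity) m
  have hnorm (z : 𝕜) : ‖(m : 𝕜)⁻¹ * z‖ = ‖z‖ / m := by
    rw [norm_mul, norm_inv, RCLike.norm_natCast, inv_mul_eq_div]
  refine ⟨(m : 𝕜)⁻¹ • H, A.smul_mem _ hA, by simp [hHs, hmne], fun t => ?_, fun t ht => ?_⟩
  · have hsub : 1 - (m : 𝕜)⁻¹ * H t = (m : 𝕜)⁻¹ * (m - H t) := by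
      rw [mul_sub, inv_mul_cancel₀ hmne]
    rw [ContinuousMap.smul_apply, smul_eq_mul, hsub, hnorm, hnorm, ← add_div, div_le_iff₀ hm0]
    linarith [hH t]
  · rw [ContinuousMap.smul_apply, smul_eq_mul, hnorm, div_le_iff₀ hm0]
    linarith [hHoff t ht, mul_pos hm0 hδ]

variable [NormedSpace 𝕜 X] {S : Submodule 𝕜 C(K, X)}

lemma PeaksAt.exists_perturbation_norm_le_one_add (hs : PeaksAt A s)
    (hmul : ∀ φ ∈ A, ∀ f ∈ S, φ • f ∈ S)
    (htensor : ∀ φ ∈ A, ∀ x : X, φ • ContinuousMap.const K x ∈ S) {U : Set K} (hU : U ∈ 𝓝 s)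
    {g : C(K, X)} (hgS : g ∈ S) (hg : ‖g‖ ≤ 1) {u : X} (hu : ‖u‖ ≤ 1) {δ : ℝ} (hδ : 0 < δ) :
    ∃ G ∈ S, ‖G‖ ≤ 1 + δ ∧ G s = u ∧ ∀ t ∉ U, ‖g t - G t‖ ≤ 2 * δ := by
  obtain ⟨h, hA, hhs, hh, hoff⟩ := hs.exists_eq_one_norm_sub_add_norm_le hU hδ
  have hgt (t : K) : ‖g t‖ ≤ 1 := (g.norm_coe_le_norm t).trans hg
  refine ⟨g - h • g + h • ContinuousMap.const K u,
    S.add_mem (S.sub_mem hgS (hmul h hA g hgS)) (htensor h hA u), ?_, by simp [hhs],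
    fun t ht => ?_⟩
  · refine (ContinuousMap.norm_le _ (by positivity)).2 fun t => ?_
    calc ‖g t - h t • g t + h t • u‖ = ‖(1 - h t) • g t + h t • u‖ := by rw [sub_smul, one_smul]
      _ ≤ ‖1 - h t‖ * ‖g t‖ + ‖h t‖ * ‖u‖ :=
        norm_add_le_of_le (norm_smul_le _ _) (norm_smul_le _ _)
      _ ≤ ‖1 - h t‖ + ‖h t‖ := add_le_add (mul_le_of_le_one_right (norm_nonneg _) (hgt t))
        (mul_le_of_le_one_right (norm_nonneg _) hu)
      _ ≤ 1 + δ := hh t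
  · calc ‖g t - (g t - h t • g t + h t • u)‖ = ‖h t • (g t - u)‖ := by congr 1; module
      _ ≤ ‖h t‖ * ‖g t - u‖ := norm_smul_le _ _
      _ ≤ δ * (1 + 1) := mul_le_mul (hoff t ht) (norm_sub_le_of_le (hgt t) hu)
        (norm_nonneg _) hδ.le
      _ = 2 * δ := by ring

lemma PeaksAt.exists_perturbation_norm_le_one (hs : PeaksAt A s)
    (hmul : ∀ φ ∈ A, ∀ f ∈ S, φ • f ∈ S)
    (htensor : ∀ φ ∈ A, ∀ x : X, φ • ContinuousMap.const K x ∈ S) {U : Set K} (hU : U ∈ 𝓝 s)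
    {g : S} (hg : ‖g‖ ≤ 1) {u : X} (hu : ‖u‖ ≤ 1) {δ : ℝ} (hδ : 0 < δ) :
    ∃ G : S, ‖G‖ ≤ 1 ∧ ‖G.1 s - u‖ ≤ δ ∧ ∀ t ∉ U, ‖g.1 t - G.1 t‖ ≤ δ := by
  obtain ⟨G₀, hG₀S, hG₀, hG₀s, hoff⟩ :=
    hs.exists_perturbation_norm_le_one_add hmul htensor hU g.2 hg hu (δ := δ / 3) (by positivity)
  let _ : NormedSpace ℝ S := NormedSpace.restrictScalars ℝ 𝕜 S
  obtain ⟨G, hG, hG₀G⟩ :=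
    exists_norm_le_one_norm_sub_le (x := (⟨G₀, hG₀S⟩ : S)) (by positivity) hG₀
  have hdist (t : K) : ‖G₀ t - G.1 t‖ ≤ δ / 3 := ((G₀ - G.1).norm_coe_le_norm t).trans hG₀G
  refine ⟨G, hG, ?_, fun t ht => ?_⟩
  · rw [← hG₀s, norm_sub_rev]
    linarith [hdist s]
  · linarith [norm_sub_le_norm_sub_add_norm_sub (g.1 t) (G₀ t) (G.1 t), hoff t ht, hdist t]

end FunctionSpaces

theorem stmt_12_general {K : Type*} [TopologicalSpace K] [CompactSpace K] [T2Space K]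
    {𝕜 : Type*} [RCLike 𝕜] {X : Type*} [SeminormedAddCommGroup X] [NormedSpace 𝕜 X]
    [NormedSpace ℝ X] [IsScalarTower ℝ 𝕜 X] {S : Submodule 𝕜 C(K, X)} {A : Submodule 𝕜 C(K, 𝕜)}
    (hmul : ∀ φ ∈ A, ∀ f ∈ S, φ • f ∈ S)
    (htensor : ∀ φ ∈ A, ∀ x : X, φ • ContinuousMap.const K x ∈ S) {f : S} {t₀ : K}
    (hacc : AccPt t₀ (Filter.principal {t | PeaksAt A t})) (hft₀ : ‖f.1 t₀‖ = 1) :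
    IsDaugavetPoint f := by
  refine isDaugavetPoint_of_forall_exists_average (ι := K) fun ε hε g hg => ?_
  have hW : {t | ‖f.1 t - f.1 t₀‖ < ε / 2} ∈ nhds t₀ :=
    (isOpen_lt (by fun_prop) continuous_const).mem_nhds (by simpa using hε)
  obtain ⟨n, hn⟩ := exists_nat_gt (4 / ε)
  obtain ⟨F, hF, rfl⟩ := (Set.Infinite.of_accPt (hacc.nhds_inter hW)).exists_subset_card_eq n
  have hcard : (0 : ℝ) < F.card := lt_trans (by positivity) hn
  obtain ⟨U, hU, hdisj⟩ := F.finite_toSet.t2_separation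
  have hpush : ∀ s ∈ F, ∃ G : S, ‖G‖ ≤ 1 ∧ ‖G.1 s - -f.1 t₀‖ ≤ ε / 2 ∧
      ∀ t ∉ U s, ‖g.1 t - G.1 t‖ ≤ ε / 2 := fun s hs =>
    (hF hs).2.exists_perturbation_norm_le_one hmul htensor ((hU s).2.mem_nhds (hU s).1) hg
      (by rw [norm_neg, hft₀]) (by positivity)
  choose! G hG hGs hGoff using hpush
  refine ⟨F, Finset.card_pos.1 (Nat.cast_pos.1 hcard), G, fun s hs => ⟨hG s hs, ?_⟩, ?_⟩
  · have hpoint : 2 - 2 * (ε / 2) ≤ ‖f.1 s - (G s).1 s‖ :=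
      two_sub_le_norm_sub hft₀ (hF hs).1.le (hGs s hs)
    rw [mul_div_cancel₀ ε two_ne_zero] at hpoint
    exact hpoint.trans ((f.1 - (G s).1).norm_coe_le_norm s)
  · have hsum : ‖∑ s ∈ F, (g.1 - (G s).1)‖ ≤ (1 + 1) + F.card * (ε / 2) :=
      norm_sum_le_of_pairwiseDisjoint hdisj (by positivity) (by positivity)
        (fun s hs => norm_sub_le_of_le hg (hG s hs)) hGoff
    rw [← Submodule.norm_coe, Submodule.coe_sum]
    rw [div_lt_iff₀ hε] at hn
    exact hsum.trans_lt (by linarith)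

/- STATEMENT 12: Let `S` be an `X`-valued function space over a uniform algebra on a
compact Hausdorff space `K` with base algebra `A = {x* ∘ f : f ∈ S, x* ∈ X*}`, and
assume moreover `A ⊗ X ⊆ S`. Let `Γ` be a closed boundary for `A` in which the
strong boundary points of `A` are dense. If `f ∈ S` with `‖f‖ = 1` attains its norm
at a limit point `t₀` of `Γ`, then `f` is a Daugavet point: for every `ε > 0`, the
closed unit ball of `S` is the closed convex hull of `{g ∈ B_S : ‖f - g‖ ≥ 2 - ε}`. -/
theorem stmt_12 {K : Type*} [TopologicalSpace K] [CompactSpace K] [T2Space K]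
    {X : Type*} [NormedAddCommGroup X] [NormedSpace ℂ X] [CompleteSpace X]
    (S : Submodule ℂ C(K, X)) (hSclosed : IsClosed (S : Set C(K, X)))
    (A : Subalgebra ℂ C(K, ℂ))
    (hAbase : (A : Set C(K, ℂ)) =
      {g : C(K, ℂ) | ∃ f ∈ S, ∃ φ : X →L[ℂ] ℂ, ∀ t : K, g t = φ (f t)})
    (hAclosed : IsClosed (A : Set C(K, ℂ)))
    (hAsep : ∀ s t : K, s ≠ t → ∃ g ∈ A, g s ≠ g t)
    (hmul : ∀ φ ∈ A, ∀ f ∈ S, φ • f ∈ S)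
    (htensor : ∀ φ ∈ A, ∀ x : X, φ • ContinuousMap.const K x ∈ S)
    (Γ : Set K) (hΓclosed : IsClosed Γ)
    (hΓbd : ∀ g ∈ A, ∃ t ∈ Γ, ‖g t‖ = ‖g‖)
    (hΓdense : Γ ⊆ closure {t | t ∈ Γ ∧ IsStrongBoundaryPoint A t})
    (f : C(K, X)) (hfS : f ∈ S) (hf1 : ‖f‖ = 1)
    (t₀ : K) (ht₀Γ : t₀ ∈ Γ) (ht₀lim : t₀ ∈ closure (Γ \ {t₀}))
    (hft₀ : ‖f t₀‖ = 1) :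
    ∀ ε > (0 : ℝ),
      Metric.closedBall (0 : S) 1 =
        closure (convexHull ℝ
          {g : S | ‖g‖ ≤ 1 ∧ 2 - ε ≤ ‖(⟨f, hfS⟩ : S) - g‖}) := by
  have hacc : AccPt t₀ (Filter.principal {t | IsStrongBoundaryPoint A t}) :=
    accPt_principal_of_subset_closure (hΓdense.trans (closure_mono fun _ ht => ht.2))
      (accPt_principal_iff_clusterPt.2 (mem_closure_iff_clusterPt.1 ht₀lim))
  exact stmt_12_general (A := A.toSubmodule) (f := ⟨f, hfS⟩) hmul htensor
    (hacc.mono (Filter.principal_mono.2 fun _ ht => ht.peaksAt)) hft₀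
end

section
/- Let K be a compact Hausdorff space, X a complex Banach space, and S an X-valued function space over a uniform algebra on K with base algebra A := {x* ∘ f : f ∈ S, x* ∈ X*}, satisfying in addition A⊗X ⊆ S. Let Γ ⊆ K be a closed boundary for A in which the set of strong boundary points of A is dense (these properties hold for the Shilov boundary of A). If Γ has no isolated points, then S has the Daugavet property: every rank-one bounded linear operator T : S → S satisfies ‖I + T‖ = 1 + ‖T‖. -/
set_option maxHeartbeats 1000000
set_option synthInstance.maxHeartbeats 1000000

open Filter Polynomial Topology

/-! Every slice of the unit ball of `S` contains, up to `ε`, functions with prescribed value `x` at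
suitable points. Start from any `f₀` in the slice and move it to `(1 - h) f₀ + h x`, where `h ∈ A`
peaks at a strong boundary point and takes its values where `|w| + |1 - w| ≤ 1 + ε`, so that the
norm hardly increases. Near a point of the perfect set `Γ` there are infinitely many strong boundary
points, and peaks `h i` over disjoint neighbourhoods satisfy `‖∑ θ i h i (x - f₀)‖ ≤ C` for
unimodular `θ i`, with `C` independent of their number; hence `∑ |ψ (h i (x - f₀))| ≤ C ‖ψ‖`, and
some peak hardly changes the value of `ψ`. Taking `x = g t₀ / ‖g‖` at a point `t₀ ∈ Γ` where
`‖g t₀‖ = ‖g‖` makes `‖f + ‖ψ‖ g‖` almost `1 + ‖ψ‖ ‖g‖`.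

The peak is a polynomial in a function of `A`: the map `z ↦ log (1 - q z) / log (1 - q)` sends the
closed unit disc into a thin neighbourhood of `[0, 1]` as `q → 1`, since the imaginary part of the
numerator is bounded while the denominator diverges. -/

section RankOne

lemma exists_norm_le_one_norm_apply_sub_norm_le {𝕜 E : Type*} [RCLike 𝕜] [NormedAddCommGroup E]
    [NormedSpace 𝕜 E] (ψ : E →L[𝕜] 𝕜) {ε : ℝ} (hε : 0 < ε) :
    ∃ f : E, ‖f‖ ≤ 1 ∧ ‖ψ f - (‖ψ‖ : 𝕜)‖ ≤ ε := by
  obtain ⟨y, hy, hψy⟩ := ψ.exists_lt_apply_of_lt_opNorm (sub_lt_self ‖ψ‖ hε)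
  obtain ⟨θ, hθ, hθy⟩ := RCLike.exists_norm_eq_mul_self (ψ y)
  refine ⟨θ • y, by rw [norm_smul, hθ, one_mul]; exact hy.le, ?_⟩
  have hle : ‖ψ y‖ ≤ ‖ψ‖ := ψ.unit_le_opNorm y hy.le
  rw [map_smul, smul_eq_mul, ← hθy, ← RCLike.ofReal_sub, RCLike.norm_ofReal, abs_le]
  constructor <;> linarith

variable {𝕜 E : Type*} [RCLike 𝕜] [SeminormedAddCommGroup E] [NormedSpace 𝕜 E]

lemma sum_norm_apply_le_of_unimodular {ι : Type*} [Fintype ι] (ψ : E →L[𝕜] 𝕜) (v : ι → E) {C : ℝ}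
    (hv : ∀ θ : ι → 𝕜, (∀ i, ‖θ i‖ = 1) → ‖∑ i, θ i • v i‖ ≤ C) :
    ∑ i, ‖ψ (v i)‖ ≤ ‖ψ‖ * C := by
  choose θ hθ hθv using fun i => RCLike.exists_norm_eq_mul_self (ψ (v i))
  have hψ : ψ (∑ i, θ i • v i) = ((∑ i, ‖ψ (v i)‖ : ℝ) : 𝕜) := by
    simp only [map_sum, map_smul, smul_eq_mul, ← hθv]
  calc ∑ i, ‖ψ (v i)‖ = ‖ψ (∑ i, θ i • v i)‖ := by
        rw [hψ, RCLike.norm_of_nonneg (Finset.sum_nonneg fun _ _ => norm_nonneg _)]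
    _ ≤ ‖ψ‖ * C := ψ.le_opNorm_of_le (hv θ hθ)

lemma norm_id_add_smulRight_eq_of_exists (ψ : E →L[𝕜] 𝕜) (g : E)
    (h : ∀ ε > 0, ∃ f : E, ‖f‖ ≤ 1 + ε ∧ ‖ψ f - (‖ψ‖ : 𝕜)‖ ≤ ε ∧
      1 + ‖ψ‖ * ‖g‖ - ε ≤ ‖f + (‖ψ‖ : 𝕜) • g‖) :
    ‖ContinuousLinearMap.id 𝕜 E + ψ.smulRight g‖ = 1 + ‖ψ.smulRight g‖ := by
  set T := ContinuousLinearMap.id 𝕜 E + ψ.smulRight g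
  refine le_antisymm ((norm_add_le _ _).trans (by gcongr; exact ContinuousLinearMap.norm_id_le)) ?_
  have happrox : ∀ ε > 0, 1 + ‖ψ‖ * ‖g‖ - ε ≤ ‖T‖ * (1 + ε) + ε * ‖g‖ := by
    intro ε hε
    obtain ⟨f, hf, hψf, hfg⟩ := h ε hε
    have hT : f + (‖ψ‖ : 𝕜) • g = T f - (ψ f - (‖ψ‖ : 𝕜)) • g := by
      simp only [T, add_apply, ContinuousLinearMap.id_apply, ContinuousLinearMap.smulRight_apply]
      module
    calc 1 + ‖ψ‖ * ‖g‖ - ε ≤ ‖T f - (ψ f - (‖ψ‖ : 𝕜)) • g‖ := hT ▸ hfg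
      _ ≤ ‖T f‖ + ‖ψ f - (‖ψ‖ : 𝕜)‖ * ‖g‖ := (norm_sub_le _ _).trans_eq (by rw [norm_smul])
      _ ≤ ‖T‖ * (1 + ε) + ε * ‖g‖ := by gcongr; exact T.le_opNorm_of_le hf
  have hlim : Tendsto (fun ε : ℝ => ‖T‖ * (1 + ε) + ε * ‖g‖ + ε) (𝓝[>] 0) (𝓝 ‖T‖) :=
    tendsto_nhdsWithin_of_tendsto_nhds <| Continuous.tendsto' (by fun_prop) _ _ (by simp)
  rw [ContinuousLinearMap.norm_smulRight_apply]
  refine ge_of_tendsto hlim ?_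
  filter_upwards [self_mem_nhdsWithin] with ε hε
  linarith [happrox ε hε]

end RankOne

section ThinNeighbourhood

lemma norm_add_norm_one_sub_le {w : ℂ} {δ : ℝ} (hre : -δ ≤ w.re) (hre' : w.re ≤ 1)
    (him : |w.im| ≤ δ) : ‖w‖ + ‖1 - w‖ ≤ 1 + 4 * δ := by
  have hw := Complex.norm_le_abs_re_add_abs_im w
  have hw' := Complex.norm_le_abs_re_add_abs_im (1 - w)
  simp only [Complex.sub_re, Complex.sub_im, Complex.one_re, Complex.one_im, zero_sub, abs_neg,
    abs_of_nonneg (sub_nonneg.2 hre')] at hw'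
  have hre_abs : |w.re| ≤ w.re + 2 * δ := abs_le.2 ⟨by linarith, by linarith [abs_nonneg w.im]⟩
  linarith

/-- The map `z ↦ log (1 - q z) / log (1 - q)` with `q = 1 - exp (-L)`, so that the denominator is
`-L`. It maps the closed unit disc into a neighbourhood of `[0, 1]` that shrinks as `L → ∞`. -/
noncomputable def logRatio (L : ℝ) (z : ℂ) : ℂ :=
  Complex.log (1 - ((1 - Real.exp (-L) : ℝ) : ℂ) * z) / ((-L : ℝ) : ℂ)

lemma logRatio_one {L : ℝ} (hL : L ≠ 0) : logRatio L 1 = 1 := by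
  rw [logRatio, mul_one, ← Complex.ofReal_one, ← Complex.ofReal_sub, sub_sub_cancel,
    ← Complex.ofReal_log (Real.exp_pos _).le, Real.log_exp, div_self, Complex.ofReal_one]
  exact Complex.ofReal_ne_zero.2 (neg_ne_zero.2 hL)

lemma norm_logRatio_add_norm_one_sub_logRatio_le {L : ℝ} (hL : 0 < L) {z : ℂ} (hz : ‖z‖ ≤ 1) :
    ‖logRatio L z‖ + ‖1 - logRatio L z‖ ≤ 1 + 8 / L := by
  set q : ℝ := 1 - Real.exp (-L)
  set u : ℂ := 1 - q * z
  have hq : 0 ≤ q := sub_nonneg.2 (Real.exp_le_one_iff.2 (by linarith))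
  have hqz : ‖(q : ℂ) * z‖ ≤ q := by
    rw [norm_mul, Complex.norm_of_nonneg hq]
    exact mul_le_of_le_one_right hq hz
  have hu_lower : Real.exp (-L) ≤ ‖u‖ := by
    have := norm_sub_norm_le 1 ((q : ℂ) * z)
    rw [norm_one] at this
    linarith
  have hu_pos : 0 < ‖u‖ := (Real.exp_pos _).trans_le hu_lower
  have hu_upper : ‖u‖ ≤ 2 := (norm_sub_le _ _).trans (by
    rw [norm_one]; linarith [Real.exp_pos (-L)])
  have hu_re : 0 ≤ u.re := by
    have := (Complex.re_le_norm ((q : ℂ) * z)).trans hqz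
    simp only [u, Complex.sub_re, Complex.one_re]
    linarith [Real.exp_pos (-L)]
  have hlog_re_le : (Complex.log u).re ≤ 1 := by
    rw [Complex.log_re]
    linarith [Real.log_le_sub_one_of_pos hu_pos]
  have hlog_re_ge : -L ≤ (Complex.log u).re := by
    rw [Complex.log_re]
    exact (Real.le_log_iff_exp_le hu_pos).2 hu_lower
  have hlog_im : |(Complex.log u).im| ≤ 2 := by
    rw [Complex.log_im]
    linarith [Complex.abs_arg_le_pi_div_two_iff.2 hu_re, Real.pi_lt_four]
  refine (norm_add_norm_one_sub_le (δ := 2 / L) ?_ ?_ ?_).trans_eq (by ring)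
  · rw [logRatio, Complex.div_ofReal_re, div_neg, neg_le_neg_iff]
    gcongr
    linarith
  · rw [logRatio, Complex.div_ofReal_re, div_neg, ← neg_div, div_le_one hL]
    linarith
  · rw [logRatio, Complex.div_ofReal_im, abs_div, abs_neg, abs_of_pos hL]
    gcongr

lemma exists_polynomial_norm_eval_sub_log_le {w : ℂ} (hw : ‖w‖ < 1) {ε : ℝ} (hε : 0 < ε) :
    ∃ p : ℂ[X], p.eval 0 = 0 ∧ ∀ z : ℂ, ‖z‖ ≤ 1 → ‖p.eval z - Complex.log (1 + w * z)‖ ≤ ε := by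
  obtain ⟨n, hn⟩ := exists_pow_lt_of_lt_one (mul_pos hε (sub_pos.2 hw)) hw
  let p : ℂ[X] := ∑ j ∈ Finset.range (n + 1), C ((-1) ^ (j + 1) * w ^ j / j) * X ^ j
  have hp : ∀ z, p.eval z = Complex.logTaylor (n + 1) (w * z) := fun z => by
    simp only [p, Complex.logTaylor, eval_finsetSum, eval_mul, eval_C, eval_pow, eval_X]
    exact Finset.sum_congr rfl fun j _ => by ring
  refine ⟨p, by rw [hp, mul_zero, Complex.logTaylor_at_zero], fun z hz => ?_⟩
  have hwz : ‖w * z‖ ≤ ‖w‖ := (norm_mul_le _ _).trans (mul_le_of_le_one_right (norm_nonneg w) hz)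
  have hw' : 0 < 1 - ‖w‖ := sub_pos.2 hw
  have hwz' : 0 < 1 - ‖w * z‖ := hw'.trans_le (by gcongr)
  rw [hp, norm_sub_rev]
  calc ‖Complex.log (1 + w * z) - Complex.logTaylor (n + 1) (w * z)‖
      ≤ ‖w * z‖ ^ (n + 1) * (1 - ‖w * z‖)⁻¹ / (n + 1) :=
        Complex.norm_log_sub_logTaylor_le n (hwz.trans_lt hw)
    _ ≤ ‖w * z‖ ^ (n + 1) * (1 - ‖w * z‖)⁻¹ :=
        div_le_self (by positivity) (by linarith [n.cast_nonneg (α := ℝ)])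
    _ ≤ ‖w‖ ^ (n + 1) * (1 - ‖w‖)⁻¹ := by gcongr
    _ ≤ ‖w‖ ^ n * (1 - ‖w‖)⁻¹ := by
        gcongr ?_ * _
        exact pow_le_pow_of_le_one (norm_nonneg w) hw.le n.le_succ
    _ ≤ ε := by
        rw [← div_eq_mul_inv, div_le_iff₀ hw']
        exact hn.le

lemma exists_polynomial_norm_eval_sub_logRatio_le {L : ℝ} (hL : 0 < L) {ε : ℝ} (hε : 0 < ε) :
    ∃ p : ℂ[X], p.eval 0 = 0 ∧ ∀ z : ℂ, ‖z‖ ≤ 1 → ‖p.eval z - logRatio L z‖ ≤ ε := by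
  let q : ℝ := 1 - Real.exp (-L)
  have hq : ‖(-q : ℂ)‖ < 1 := by
    rw [norm_neg, Complex.norm_of_nonneg (sub_nonneg.2 (Real.exp_le_one_iff.2 (by linarith)))]
    linarith [Real.exp_pos (-L)]
  obtain ⟨p, hp0, hp⟩ := exists_polynomial_norm_eval_sub_log_le hq (mul_pos hL hε)
  refine ⟨C (((-L : ℝ) : ℂ)⁻¹) * p, by rw [eval_mul, hp0, mul_zero], fun z hz => ?_⟩
  have hfactor : (C (((-L : ℝ) : ℂ)⁻¹) * p).eval z - logRatio L z =
      ((-L : ℝ) : ℂ)⁻¹ * (p.eval z - Complex.log (1 + -q * z)) := by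
    rw [eval_mul, eval_C, logRatio, neg_mul, ← sub_eq_add_neg]
    ring
  rw [hfactor, norm_mul, norm_inv, Complex.norm_real, norm_neg, Real.norm_of_nonneg hL.le,
    inv_mul_le_iff₀ hL]
  exact hp z hz

lemma exists_polynomial_norm_add_norm_one_sub_le {ε : ℝ} (hε : 0 < ε) :
    ∃ p : ℂ[X], p.eval 0 = 0 ∧ ‖1 - p.eval 1‖ ≤ ε ∧
      ∀ z : ℂ, ‖z‖ ≤ 1 → ‖p.eval z‖ + ‖1 - p.eval z‖ ≤ 1 + ε := by
  have hL : 0 < 16 / ε := by positivity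
  obtain ⟨p, hp0, hp⟩ :=
    exists_polynomial_norm_eval_sub_logRatio_le hL (show 0 < ε / 4 by positivity)
  refine ⟨p, hp0, ?_, fun z hz => ?_⟩
  · have := hp 1 norm_one.le
    rw [logRatio_one hL.ne', norm_sub_rev] at this
    linarith
  · have hthin : ‖logRatio (16 / ε) z‖ + ‖1 - logRatio (16 / ε) z‖ ≤ 1 + ε / 2 :=
      (norm_logRatio_add_norm_one_sub_logRatio_le hL hz).trans_eq (by field_simp; ring)
    have hp_le := norm_le_norm_add_norm_sub' (p.eval z) (logRatio (16 / ε) z)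
    have hp_le' := norm_le_norm_add_norm_sub' (1 - p.eval z) (1 - logRatio (16 / ε) z)
    rw [sub_sub_sub_cancel_left, norm_sub_rev (logRatio _ z)] at hp_le'
    linarith [hp z hz]

end ThinNeighbourhood

section AlmostPeak

variable {K : Type*} [TopologicalSpace K]

/-- The function `h` is, up to `ε`, a peak function at `s` with values in the segment `[0, 1]`: the
values of `h` are restricted by the convexity defect `‖h t‖ + ‖1 - h t‖ - 1`, which is what controls
the norm of `(1 - h) f₀ + h x`. -/
structure IsAlmostPeakAt (h : C(K, ℂ)) (s : K) (ε : ℝ) : Prop where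
  norm_one_sub_le : ‖1 - h s‖ ≤ ε
  norm_add_norm_one_sub_le (t : K) : ‖h t‖ + ‖1 - h t‖ ≤ 1 + ε

lemma IsAlmostPeakAt.mono {h : C(K, ℂ)} {s : K} {δ ε : ℝ} (hh : IsAlmostPeakAt h s δ)
    (hδε : δ ≤ ε) : IsAlmostPeakAt h s ε where
  norm_one_sub_le := hh.norm_one_sub_le.trans hδε
  norm_add_norm_one_sub_le t := (hh.norm_add_norm_one_sub_le t).trans (by gcongr)

lemma IsAlmostPeakAt.norm_apply_le {h : C(K, ℂ)} {s : K} {ε : ℝ} (hh : IsAlmostPeakAt h s ε)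
    (t : K) : ‖h t‖ ≤ 1 + ε := by
  linarith [hh.norm_add_norm_one_sub_le t, norm_nonneg (1 - h t)]

lemma IsStrongBoundaryPoint.exists_isAlmostPeakAt [CompactSpace K] {A : Subalgebra ℂ C(K, ℂ)}
    {s : K} (hs : IsStrongBoundaryPoint A s) {U : Set K} (hU : IsOpen U) (hsU : s ∈ U) {ε : ℝ}
    (hε : 0 < ε) : ∃ h ∈ A, IsAlmostPeakAt h s ε ∧ ∀ t ∉ U, ‖h t‖ ≤ ε := by
  obtain ⟨p, hp0, hp1, hp⟩ := exists_polynomial_norm_add_norm_one_sub_le hε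
  obtain ⟨δ, hδ, hpδ⟩ := Metric.continuousAt_iff.1 (p.continuous.continuousAt (x := 0)) ε hε
  obtain ⟨h, hA, hhs, hnorm, c, hc, hoff⟩ := hs U hU hsU
  obtain ⟨n, hn⟩ := exists_pow_lt_of_lt_one hδ (max_lt hc one_pos)
  have heval : ∀ t, aeval (h ^ n) p t = p.eval (h t ^ n) := fun t => by
    rw [aeval_continuousMap_apply, ContinuousMap.pow_apply]
  refine ⟨aeval (h ^ n) p, ?_, ⟨?_, fun t => ?_⟩, fun t ht => ?_⟩
  · exact Algebra.adjoin_le (Set.singleton_subset_iff.2 (A.pow_mem hA n))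
      (aeval_mem_adjoin_singleton ℂ (h ^ n))
  · rwa [heval, hhs, one_pow]
  · have ht : ‖h t‖ ≤ 1 := hnorm ▸ h.norm_coe_le_norm t
    rw [heval]
    exact hp _ ((norm_pow _ _).trans_le (pow_le_one₀ (norm_nonneg _) ht))
  · have hsmall : dist (h t ^ n) 0 < δ := by
      rw [dist_zero_right, norm_pow]
      exact (pow_le_pow_left₀ (norm_nonneg _) ((hoff t ht).trans (le_max_left c 0)) n).trans_lt hn
    have := hpδ hsmall
    rw [hp0, dist_zero_right] at this
    exact (heval t ▸ this).le

end AlmostPeak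

section DisjointSupports

variable {ι K : Type*} [Fintype ι] {U : ι → Set K}

lemma sum_le_add_card_mul_of_pairwise_disjoint (hU : Pairwise (Function.onFun Disjoint U))
    {a : ι → ℝ} {t : K} {B δ : ℝ} (hB : 0 ≤ B) (hδ : 0 ≤ δ) (haB : ∀ i, a i ≤ B)
    (haδ : ∀ i, t ∉ U i → a i ≤ δ) :
    ∑ i, a i ≤ B + Fintype.card ι * δ := by
  classical
  have hcard : (Finset.univ.filter fun i => t ∈ U i).card ≤ 1 := by
    refine Finset.card_le_one.2 fun i hi j hj => hU.eq (Set.not_disjoint_iff.2 ⟨t, ?_, ?_⟩)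
    exacts [(Finset.mem_filter.1 hi).2, (Finset.mem_filter.1 hj).2]
  calc ∑ i, a i ≤ ∑ i, ((if t ∈ U i then B else 0) + δ) := by
        refine Finset.sum_le_sum fun i _ => ?_
        split_ifs with hi
        · linarith [haB i]
        · linarith [haδ i hi]
    _ = (Finset.univ.filter fun i => t ∈ U i).card * B + Fintype.card ι * δ := by
        rw [Finset.sum_add_distrib, ← Finset.sum_filter, Finset.sum_const, Finset.sum_const,
          nsmul_eq_mul, nsmul_eq_mul, Finset.card_univ]
    _ ≤ B + Fintype.card ι * δ := by
        gcongr
        exact mul_le_of_le_one_left hB (by exact_mod_cast hcard)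

lemma norm_sum_smul_smul_le_of_pairwise_disjoint [TopologicalSpace K] [CompactSpace K]
    {𝕜 X : Type*} [RCLike 𝕜] [SeminormedAddCommGroup X] [NormedSpace 𝕜 X]
    (hU : Pairwise (Function.onFun Disjoint U)) {h : ι → C(K, 𝕜)} {B δ : ℝ} (hB : 0 ≤ B)
    (hδ : 0 ≤ δ) (hhB : ∀ i t, ‖h i t‖ ≤ B) (hhδ : ∀ i, ∀ t ∉ U i, ‖h i t‖ ≤ δ) (w : C(K, X))
    {θ : ι → 𝕜} (hθ : ∀ i, ‖θ i‖ = 1) :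
    ‖∑ i, θ i • h i • w‖ ≤ (B + Fintype.card ι * δ) * ‖w‖ := by
  refine (ContinuousMap.norm_le _ (by positivity)).2 fun t => ?_
  have hsum : ∑ i, ‖h i t‖ ≤ B + Fintype.card ι * δ :=
    sum_le_add_card_mul_of_pairwise_disjoint hU hB hδ (fun i => hhB i t) fun i => hhδ i t
  calc ‖(∑ i, θ i • h i • w) t‖ = ‖∑ i, θ i • h i t • w t‖ := by
        rw [ContinuousMap.sum_apply]; rfl
    _ ≤ ∑ i, ‖h i t‖ * ‖w t‖ := by
        refine norm_sum_le_of_le _ fun i _ => ?_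
        rw [norm_smul, norm_smul, hθ, one_mul]
    _ = (∑ i, ‖h i t‖) * ‖w t‖ := (Finset.sum_mul _ _ _).symm
    _ ≤ (B + Fintype.card ι * δ) * ‖w‖ := by gcongr; exact w.norm_coe_le_norm t

end DisjointSupports

section FunctionSpace

variable {K : Type*} [TopologicalSpace K] [CompactSpace K] {X : Type*}

lemma exists_mem_norm_apply_eq_of_dual [SeminormedAddCommGroup X] [NormedSpace ℂ X] {Γ : Set K}
    {f : C(K, X)}
    (hf : ∀ φ : X →L[ℂ] ℂ, ∃ t ∈ Γ, ‖φ (f t)‖ = ‖(φ : C(X, ℂ)).comp f‖) :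
    ∃ t ∈ Γ, ‖f t‖ = ‖f‖ := by
  have : Nonempty K := let ⟨t, _⟩ := hf 0; ⟨t⟩
  obtain ⟨s, -, hs⟩ := isCompact_univ.exists_isMaxOn Set.univ_nonempty
    f.continuous.norm.continuousOn
  have hfs : ‖f‖ ≤ ‖f s‖ := (ContinuousMap.norm_le _ (norm_nonneg _)).2 fun t => hs (Set.mem_univ t)
  obtain ⟨φ, hφ, hφs⟩ := exists_dual_vector'' ℂ (f s)
  obtain ⟨t, htΓ, ht⟩ := hf φ
  refine ⟨t, htΓ, le_antisymm (f.norm_coe_le_norm t) ?_⟩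
  calc ‖f‖ ≤ ‖φ (f s)‖ := by rw [hφs, RCLike.norm_ofReal, abs_norm]; exact hfs
    _ ≤ ‖φ (f t)‖ := ht ▸ ((φ : C(X, ℂ)).comp f).norm_coe_le_norm s
    _ ≤ ‖f t‖ := (φ.le_of_opNorm_le hφ _).trans_eq (one_mul _)

lemma sub_le_norm_add_smul_of_norm_apply_sub_le {𝕜 : Type*} [RCLike 𝕜] [SeminormedAddCommGroup X]
    [NormedSpace 𝕜 X] {f g : C(K, X)} {s t : K} (ht : ‖g t‖ = ‖g‖) (hg : ‖g‖ ≠ 0) {c δ : ℝ}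
    (hc : 0 ≤ c) (hf : ‖f s - ((‖g‖⁻¹ : ℝ) : 𝕜) • g t‖ ≤ δ) (hgs : ‖g s - g t‖ ≤ δ) :
    1 + c * ‖g‖ - δ * (1 + c) ≤ ‖f + (c : 𝕜) • g‖ := by
  have hpeak : ‖((‖g‖⁻¹ + c : ℝ) : 𝕜) • g t‖ = 1 + c * ‖g‖ := by
    rw [norm_smul, RCLike.norm_of_nonneg (by positivity), ht, add_mul, inv_mul_cancel₀ hg]
  have hsplit : ((‖g‖⁻¹ + c : ℝ) : 𝕜) • g t =
      (f + (c : 𝕜) • g) s - ((f s - ((‖g‖⁻¹ : ℝ) : 𝕜) • g t) + (c : 𝕜) • (g s - g t)) := by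
    rw [RCLike.ofReal_add, ContinuousMap.add_apply, ContinuousMap.smul_apply]
    module
  have hbound : 1 + c * ‖g‖ ≤ ‖f + (c : 𝕜) • g‖ + (δ + c * δ) := by
    rw [← hpeak, hsplit]
    refine (norm_sub_le _ _).trans <|
      add_le_add (ContinuousMap.norm_coe_le_norm _ s) ?_
    refine (norm_add_le _ _).trans (add_le_add hf ?_)
    rw [norm_smul, RCLike.norm_of_nonneg hc]
    gcongr
  linarith

variable [T2Space K] [NormedAddCommGroup X] [NormedSpace ℂ X] {A : Subalgebra ℂ C(K, ℂ)}
  {S : Submodule ℂ C(K, X)} {D : Set K}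

lemma exists_isAlmostPeakAt_norm_apply_smul_le (hmul : ∀ φ ∈ A, ∀ f ∈ S, φ • f ∈ S)
    (hD : D.Infinite) (hDA : ∀ s ∈ D, IsStrongBoundaryPoint A s) (ψ : S →L[ℂ] ℂ) (w : S) {ε : ℝ}
    (hε : 0 < ε) :
    ∃ s ∈ D, ∃ h, ∃ hA : h ∈ A, IsAlmostPeakAt h s ε ∧ ‖ψ ⟨h • w, hmul h hA w w.2⟩‖ ≤ ε := by
  obtain ⟨n, hn⟩ := exists_nat_gt (‖ψ‖ * (3 * ‖w‖) / ε)
  have hn0 : 0 < (n : ℝ) := lt_of_le_of_lt (by positivity) hn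
  let δ : ℝ := min ε (1 / n)
  have hδ : 0 < δ := by positivity
  have hnδ : n * δ ≤ 1 := by
    calc n * δ ≤ n * (1 / n) := by gcongr; exact min_le_right _ _
      _ = 1 := mul_one_div_cancel hn0.ne'
  have hδ1 : δ ≤ 1 := by
    refine (le_mul_of_one_le_left hδ.le ?_).trans hnδ
    exact_mod_cast hn0
  obtain ⟨F, hFD, hFn⟩ := hD.exists_subset_card_eq n
  obtain ⟨U, hU, hUF⟩ := F.finite_toSet.t2_separation
  choose h hA hpeak hoff using fun s : F =>
    (hDA s (hFD s.2)).exists_isAlmostPeakAt (hU s).2 (hU s).1 hδ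
  let v : F → S := fun s => ⟨h s • w, hmul _ (hA s) w w.2⟩
  have hv : ∀ θ : F → ℂ, (∀ s, ‖θ s‖ = 1) → ‖∑ s, θ s • v s‖ ≤ 3 * ‖w‖ := fun θ hθ => by
    have hsum := norm_sum_smul_smul_le_of_pairwise_disjoint (U := fun s : F => U s)
      (fun s t hst => hUF s.2 t.2 (Subtype.coe_injective.ne hst)) zero_le_two hδ.le
      (fun s t => ((hpeak s).norm_apply_le t).trans (by linarith)) hoff (w : C(K, X)) hθ
    rw [Fintype.card_coe, hFn] at hsum
    calc ‖∑ s, θ s • v s‖ = ‖∑ s, θ s • h s • (w : C(K, X))‖ := by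
          rw [Submodule.coe_norm, Submodule.coe_sum]; rfl
      _ ≤ (2 + n * δ) * ‖w‖ := hsum
      _ ≤ 3 * ‖w‖ := by gcongr; linarith
  have hψv : ∑ s, ‖ψ (v s)‖ ≤ ∑ _s : F, ε := by
    refine (sum_norm_apply_le_of_unimodular ψ v hv).trans ?_
    rw [Finset.sum_const, Finset.card_univ, Fintype.card_coe, hFn, nsmul_eq_mul]
    exact ((div_lt_iff₀ hε).1 hn).le
  have hF : (Finset.univ : Finset F).Nonempty := by
    rw [← Finset.card_pos, Finset.card_univ, Fintype.card_coe, hFn]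
    exact_mod_cast hn0
  obtain ⟨s, -, hs⟩ := Finset.exists_le_of_sum_le hF hψv
  exact ⟨s, hFD s.2, h s, hA s, (hpeak s).mono (min_le_left _ _), hs⟩

lemma exists_mem_norm_apply_sub_le (hmul : ∀ φ ∈ A, ∀ f ∈ S, φ • f ∈ S)
    (hconst : ∀ x : X, ContinuousMap.const K x ∈ S) (hD : D.Infinite)
    (hDA : ∀ s ∈ D, IsStrongBoundaryPoint A s) (ψ : S →L[ℂ] ℂ) {f₀ : S} (hf₀ : ‖f₀‖ ≤ 1) {x : X}
    (hx : ‖x‖ ≤ 1) {ε : ℝ} (hε : 0 < ε) :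
    ∃ s ∈ D, ∃ f : S, ‖f‖ ≤ 1 + ε ∧ ‖(f : C(K, X)) s - x‖ ≤ ε ∧ ‖ψ f - ψ f₀‖ ≤ ε := by
  let w : S := ⟨ContinuousMap.const K x, hconst x⟩ - f₀
  obtain ⟨s, hsD, h, hA, hpeak, hψ⟩ :=
    exists_isAlmostPeakAt_norm_apply_smul_le hmul hD hDA ψ w (half_pos hε)
  let f : S := f₀ + ⟨h • w, hmul h hA w w.2⟩
  have hf₀t : ∀ t, ‖(f₀ : C(K, X)) t‖ ≤ 1 := fun t =>
    ((f₀ : C(K, X)).norm_coe_le_norm t).trans hf₀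
  have hf : ∀ t, (f : C(K, X)) t = (1 - h t) • (f₀ : C(K, X)) t + h t • x := fun t => by
    change (f₀ : C(K, X)) t + h t • (x - (f₀ : C(K, X)) t) = _
    module
  refine ⟨s, hsD, f, (ContinuousMap.norm_le _ (by positivity)).2 fun t => ?_, ?_, ?_⟩
  · calc ‖(f : C(K, X)) t‖ ≤ ‖1 - h t‖ * ‖(f₀ : C(K, X)) t‖ + ‖h t‖ * ‖x‖ := by
          rw [hf, ← norm_smul, ← norm_smul]
          exact norm_add_le _ _
      _ ≤ ‖1 - h t‖ * 1 + ‖h t‖ * 1 := by gcongr; exact hf₀t t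
      _ ≤ 1 + ε := by linarith [hpeak.norm_add_norm_one_sub_le t]
  · have hfx : (f : C(K, X)) s - x = (1 - h s) • ((f₀ : C(K, X)) s - x) := by
      rw [hf]
      module
    calc ‖(f : C(K, X)) s - x‖ ≤ ε / 2 * (1 + 1) := by
          rw [hfx, norm_smul]
          gcongr
          exacts [hpeak.norm_one_sub_le, (norm_sub_le _ _).trans (add_le_add (hf₀t s) hx)]
      _ = ε := by ring
  · rw [map_add, add_sub_cancel_left]
    linarith

theorem stmt_13_general (hmul : ∀ φ ∈ A, ∀ f ∈ S, φ • f ∈ S)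
    (hconst : ∀ x : X, ContinuousMap.const K x ∈ S) {Γ : Set K}
    (hnorm : ∀ f ∈ S, ∃ t ∈ Γ, ‖f t‖ = ‖f‖) (hdense : Γ ⊆ closure {t | IsStrongBoundaryPoint A t})
    (hΓ : Preperfect Γ) (ψ : S →L[ℂ] ℂ) {g : S} (hg : g ≠ 0) :
    ‖ContinuousLinearMap.id ℂ S + ψ.smulRight g‖ = 1 + ‖ψ.smulRight g‖ := by
  obtain ⟨t₀, ht₀Γ, ht₀⟩ := hnorm g g.2
  have hacc : AccPt t₀ (𝓟 {t | IsStrongBoundaryPoint A t}) := by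
    rw [← mem_derivedSet, ← derivedSet_closure]
    exact (hΓ t₀ ht₀Γ).mono (principal_mono.2 hdense)
  have hg0 : ‖g‖ ≠ 0 := norm_ne_zero_iff.2 hg
  have hx : ‖((‖g‖⁻¹ : ℝ) : ℂ) • (g : C(K, X)) t₀‖ ≤ 1 := by
    rw [norm_smul, Complex.norm_of_nonneg (by positivity), ht₀]
    exact (inv_mul_cancel₀ hg0).le
  refine norm_id_add_smulRight_eq_of_exists ψ g fun ε hε => ?_
  let δ : ℝ := ε / (2 + ‖ψ‖)
  have hδ : 0 < δ := by positivity
  have hδε : δ * (2 + ‖ψ‖) = ε := div_mul_cancel₀ _ (by positivity)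
  have hδψ : 0 ≤ δ * ‖ψ‖ := by positivity
  obtain ⟨f₀, hf₀, hψf₀⟩ := exists_norm_le_one_norm_apply_sub_norm_le ψ hδ
  have hV : {t | ‖(g : C(K, X)) t - (g : C(K, X)) t₀‖ < δ} ∈ 𝓝 t₀ :=
    (isOpen_lt (by fun_prop) continuous_const).mem_nhds (by simpa using hδ)
  obtain ⟨s, ⟨hsV, -⟩, f, hf, hfs, hψf⟩ := exists_mem_norm_apply_sub_le hmul hconst
    (Set.Infinite.of_accPt (hacc.nhds_inter hV)) (fun _ hs => hs.2) ψ hf₀ hx hδ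
  refine ⟨f, by linarith, ?_, ?_⟩
  · exact (norm_sub_le_norm_sub_add_norm_sub _ (ψ f₀) _).trans (by linarith)
  · have hfg := sub_le_norm_add_smul_of_norm_apply_sub_le (f := (f : C(K, X))) ht₀ hg0
      (norm_nonneg ψ) hfs hsV.le
    exact le_trans (by rw [Submodule.coe_norm]; linarith) hfg

end FunctionSpace

/- STATEMENT 13: Let `S` be an `X`-valued function space over a uniform algebra on a
compact Hausdorff space `K` with base algebra `A = {x* ∘ f : f ∈ S, x* ∈ X*}`,
satisfying `A ⊗ X ⊆ S`. Let `Γ` be a closed boundary for `A` in which the strong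
boundary points of `A` are dense. If `Γ` has no isolated points, then `S` has the
Daugavet property: every rank-one bounded linear operator `T` (i.e. `T = ψ(·) • g`
with `ψ ≠ 0`, `g ≠ 0`) satisfies `‖I + T‖ = 1 + ‖T‖`. -/
theorem stmt_13 {K : Type*} [TopologicalSpace K] [CompactSpace K] [T2Space K]
    {X : Type*} [NormedAddCommGroup X] [NormedSpace ℂ X] [CompleteSpace X]
    (S : Submodule ℂ C(K, X)) (hSclosed : IsClosed (S : Set C(K, X)))
    (A : Subalgebra ℂ C(K, ℂ))
    (hAbase : (A : Set C(K, ℂ)) =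
      {g : C(K, ℂ) | ∃ f ∈ S, ∃ φ : X →L[ℂ] ℂ, ∀ t : K, g t = φ (f t)})
    (hAclosed : IsClosed (A : Set C(K, ℂ)))
    (hAsep : ∀ s t : K, s ≠ t → ∃ g ∈ A, g s ≠ g t)
    (hmul : ∀ φ ∈ A, ∀ f ∈ S, φ • f ∈ S)
    (htensor : ∀ φ ∈ A, ∀ x : X, φ • ContinuousMap.const K x ∈ S)
    (Γ : Set K) (hΓclosed : IsClosed Γ)
    (hΓbd : ∀ g ∈ A, ∃ t ∈ Γ, ‖g t‖ = ‖g‖)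
    (hΓdense : Γ ⊆ closure {t | t ∈ Γ ∧ IsStrongBoundaryPoint A t})
    (hΓnoiso : ∀ t ∈ Γ, t ∈ closure (Γ \ {t})) :
    ∀ (ψ : S →L[ℂ] ℂ) (g : S), ψ ≠ 0 → g ≠ 0 →
      ‖ContinuousLinearMap.id ℂ S + ψ.smulRight g‖ = 1 + ‖ψ.smulRight g‖ := by
  intro ψ g _ hg
  exact stmt_13_general hmul (fun x => by simpa using htensor 1 A.one_mem x)
    (fun f hf => exists_mem_norm_apply_eq_of_dual fun φ =>
      hΓbd ((φ : C(X, ℂ)).comp f) (hAbase.ge ⟨f, hf, φ, fun _ => rfl⟩))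
    (hΓdense.trans (closure_mono fun _ ht => ht.2))
    (fun t ht => accPt_principal_iff_clusterPt.2 (mem_closure_iff_clusterPt.1 (hΓnoiso t ht))) ψ hg
end

section
/- Let K be a compact Hausdorff space, X a uniformly convex complex Banach space, and S an X-valued function space over a uniform algebra on K with base algebra A := {x* ∘ f : f ∈ S, x* ∈ X*}. Let Γ ⊆ K be a closed boundary for A in which the set of strong boundary points of A is dense (these properties hold for the Shilov boundary of A). If f ∈ S with ‖f‖ = 1 is a Δ-point of S (i.e., f belongs to the closed convex hull of Δ_ε(f) = {g ∈ B_S : ‖f − g‖ ≥ 2 − ε} for every ε > 0), then there exists a limit point t₀ of Γ (t₀ ∈ Γ such that every neighborhood of t₀ meets Γ∖{t₀}) with ‖f(t₀)‖_X = 1. -/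
set_option maxHeartbeats 1000000
set_option synthInstance.maxHeartbeats 1000000

/-!
Suppose `‖f t‖ < 1` at every limit point `t` of `Γ`. By compactness `F = {t ∈ Γ | ‖f t‖ = 1}` is
finite and `‖f t‖` is bounded away from `1` on `Γ \ F`. Sum over `t ∈ F` the functionals
`g ↦ φ t (g t)`, where `φ t` norms `f t`. The sum has the value `|F|` at `f`, so the Δ-point
property provides `g` in the unit ball, almost at distance `2` from `f`, at which the sum
exceeds `|F| - 1`; hence every summand at `g` is positive and `‖f t + g t‖ > 1` on `F`. By uniform
convexity `‖f t - g t‖` stays away from `2` on `F`, and off `F` it does so because `‖f t‖` stays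
away from `1`. But `f - g` attains its norm on `Γ`, a contradiction.
-/

section LimitPoints

variable {K : Type*} [TopologicalSpace K] {Γ F : Set K}

lemma finite_of_forall_notMem_closure_sdiff (hF : IsCompact F) (hFΓ : F ⊆ Γ)
    (hlim : ∀ t ∈ F, t ∉ closure (Γ \ {t})) : F.Finite := by
  by_contra hinf
  obtain ⟨t, htF, hacc⟩ := Set.Infinite.exists_accPt_of_subset_isCompact hinf hF subset_rfl
  refine hlim t htF (closure_mono (Set.sdiff_subset_sdiff_left hFΓ) ?_)
  exact mem_closure_iff_clusterPt.2 (accPt_principal_iff_clusterPt.1 hacc)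

lemma isClosed_sdiff_of_forall_notMem_closure_sdiff (hΓ : IsClosed Γ)
    (hlim : ∀ t ∈ F, t ∉ closure (Γ \ {t})) : IsClosed (Γ \ F) := by
  refine isClosed_of_closure_subset fun t ht => ⟨?_, fun htF => hlim t htF ?_⟩
  · exact closure_minimal Set.sdiff_subset hΓ ht
  · exact closure_mono (Set.sdiff_subset_sdiff_right (Set.singleton_subset_iff.2 htF)) ht

end LimitPoints

section DeltaPoints

variable {E : Type*} [SeminormedAddCommGroup E] [NormedSpace ℝ E]

/-- The Δ-point condition: for every `ε > 0`, `x` lies in the closed convex hull of the points of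
the unit ball at distance at least `2 - ε` from `x`. The usual normalization `‖x‖ = 1` is not part
of the definition because it follows: `‖x‖ ≤ 1` by convexity, and `2 - ε ≤ ‖x‖ + 1` for all `ε`. -/
def IsDeltaPoint (x : E) : Prop :=
  ∀ ε > (0 : ℝ), x ∈ closure (convexHull ℝ {y : E | ‖y‖ ≤ 1 ∧ 2 - ε ≤ ‖x - y‖})

namespace IsDeltaPoint

variable {x : E} {ε : ℝ} {ι : Type*}

lemma norm_le_one (hx : IsDeltaPoint x) : ‖x‖ ≤ 1 := by
  have hhull : convexHull ℝ {y : E | ‖y‖ ≤ 1 ∧ 2 - 1 ≤ ‖x - y‖} ⊆ Metric.closedBall 0 1 :=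
    convexHull_min (fun y hy => mem_closedBall_zero_iff.2 hy.1) (convex_closedBall 0 1)
  exact mem_closedBall_zero_iff.1
    (closure_minimal hhull Metric.isClosed_closedBall (hx 1 one_pos))

lemma exists_lt_apply (hx : IsDeltaPoint x) (hε : 0 < ε) (φ : E →L[ℝ] ℝ) {a : ℝ}
    (ha : a < φ x) : ∃ y, ‖y‖ ≤ 1 ∧ 2 - ε ≤ ‖x - y‖ ∧ a < φ y := by
  by_contra! hle
  have hhull : convexHull ℝ {y : E | ‖y‖ ≤ 1 ∧ 2 - ε ≤ ‖x - y‖} ⊆ {y | φ y ≤ a} :=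
    convexHull_min (fun y hy => hle y hy.1 hy.2)
      (convex_halfSpace_le φ.toLinearMap.isLinear a)
  exact ha.not_ge (closure_minimal hhull (isClosed_le φ.continuous continuous_const) (hx ε hε))

lemma exists_forall_lt_apply (hx : IsDeltaPoint x) (hε : 0 < ε) {s : Finset ι}
    {φ : ι → E →L[ℝ] ℝ} (hφ : ∀ i ∈ s, ‖φ i‖ ≤ 1) (hφx : ∀ i ∈ s, 1 ≤ φ i x) {a : ℝ}
    (ha : a < 1) : ∃ y, ‖y‖ ≤ 1 ∧ 2 - ε ≤ ‖x - y‖ ∧ ∀ i ∈ s, a < φ i y := by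
  have hsum : (s.card : ℝ) ≤ ∑ i ∈ s, φ i x := by
    simpa using s.card_nsmul_le_sum (fun i => φ i x) 1 hφx
  obtain ⟨y, hy, hxy, hφy⟩ := hx.exists_lt_apply hε (∑ i ∈ s, φ i) (a := s.card - (1 - a))
    (by rw [sum_apply]; linarith)
  refine ⟨y, hy, hxy, fun i hi => ?_⟩
  have hdefect_nonneg : ∀ j ∈ s, 0 ≤ 1 - φ j y := fun j hj =>
    sub_nonneg.2 ((le_abs_self _).trans ((φ j).unit_le_opNorm y hy |>.trans (hφ j hj)))
  have hdefect : 1 - φ i y < 1 - a :=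
    calc 1 - φ i y ≤ ∑ j ∈ s, (1 - φ j y) := Finset.single_le_sum hdefect_nonneg hi
      _ = s.card - ∑ j ∈ s, φ j y := by simp
      _ < 1 - a := by rw [sum_apply] at hφy; linarith
  linarith

lemma exists_forall_lt_norm_add {Y : Type*} [SeminormedAddCommGroup Y] [NormedSpace ℝ Y]
    (hx : IsDeltaPoint x) (hε : 0 < ε) {s : Finset ι} {L : ι → E →L[ℝ] Y}
    (hL : ∀ i ∈ s, ‖L i‖ ≤ 1) (hLx : ∀ i ∈ s, 1 ≤ ‖L i x‖) {a : ℝ} (ha : a < 2) :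
    ∃ y, ‖y‖ ≤ 1 ∧ 2 - ε ≤ ‖x - y‖ ∧ ∀ i ∈ s, a < ‖L i x + L i y‖ := by
  choose φ hφ hφL using fun i => exists_dual_vector'' ℝ (L i x)
  have hφL_norm : ∀ i ∈ s, ‖(φ i).comp (L i)‖ ≤ 1 := fun i hi =>
    ((φ i).opNorm_comp_le (L i)).trans (mul_le_one₀ (hφ i) (norm_nonneg _) (hL i hi))
  obtain ⟨y, hy, hxy, hφy⟩ := hx.exists_forall_lt_apply hε hφL_norm
    (fun i hi => (hLx i hi).trans_eq (hφL i).symm) (a := a - 1) (by linarith)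
  refine ⟨y, hy, hxy, fun i hi => ?_⟩
  calc a < ‖L i x‖ + φ i (L i y) := by
        have hφLy : a - 1 < φ i (L i y) := hφy i hi
        linarith [hLx i hi]
    _ = φ i (L i x + L i y) := by rw [map_add, hφL]; rfl
    _ ≤ ‖φ i (L i x + L i y)‖ := le_abs_self _
    _ ≤ ‖L i x + L i y‖ := (φ i).le_of_opNorm_le_of_le (hφ i) le_rfl |>.trans_eq (one_mul _)

lemma exists_forall_lt_norm_apply_add {K X : Type*} [TopologicalSpace K] [CompactSpace K]
    [SeminormedAddCommGroup X] [NormedSpace ℝ X] {S : Submodule ℝ C(K, X)} {f : S}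
    (hf : IsDeltaPoint f) (hε : 0 < ε) {s : Finset K} (hfs : ∀ t ∈ s, 1 ≤ ‖f.1 t‖) {a : ℝ}
    (ha : a < 2) : ∃ g : S, ‖g‖ ≤ 1 ∧ 2 - ε ≤ ‖f - g‖ ∧ ∀ t ∈ s, a < ‖f.1 t + g.1 t‖ :=
  hf.exists_forall_lt_norm_add hε (L := fun t => (ContinuousMap.evalCLM ℝ t).comp S.subtypeL)
    (fun t _ => ContinuousLinearMap.opNorm_le_bound _ zero_le_one fun g =>
      (g.1.norm_coe_le_norm t).trans_eq (one_mul _).symm) hfs ha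

end IsDeltaPoint

end DeltaPoints

lemma exists_forall_closedBall_norm_sub_le_two_sub (X : Type*) [SeminormedAddCommGroup X]
    [NormedSpace ℝ X] [UniformConvexSpace X] {η : ℝ} (hη : 0 < η) :
    ∃ δ > 0, ∀ x y : X, ‖x‖ ≤ 1 → ‖y‖ ≤ 1 → η ≤ ‖x + y‖ → ‖x - y‖ ≤ 2 - δ := by
  obtain ⟨δ, hδ, hconvex⟩ := exists_forall_closed_ball_dist_add_le_two_sub X hη
  refine ⟨δ, hδ, fun x y hx hy hxy => ?_⟩
  rw [sub_eq_add_neg]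
  exact hconvex hx ((norm_neg y).trans_le hy) (by rwa [sub_neg_eq_add])

section NormAttainment

variable {K X : Type*} [TopologicalSpace K] [CompactSpace K] [SeminormedAddCommGroup X]

lemma exists_norm_apply_eq_norm [Nonempty K] (f : C(K, X)) : ∃ t, ‖f t‖ = ‖f‖ := by
  obtain ⟨t, -, ht⟩ := isCompact_univ.exists_isMaxOn Set.univ_nonempty
    f.continuous.norm.continuousOn
  exact ⟨t, (f.norm_coe_le_norm t).antisymm
    (f.norm_le_of_nonempty.2 fun s => ht (Set.mem_univ s))⟩

lemma exists_mem_norm_apply_eq_norm_of_dual (𝕜 : Type*) [RCLike 𝕜] [NormedSpace 𝕜 X] {Γ : Set K}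
    (f : C(K, X)) (hf : ∀ φ : StrongDual 𝕜 X, ∃ t ∈ Γ, ‖φ (f t)‖ = ‖(φ : C(X, 𝕜)).comp f‖) :
    ∃ t ∈ Γ, ‖f t‖ = ‖f‖ := by
  obtain ⟨t₀, -, -⟩ := hf 0
  have : Nonempty K := ⟨t₀⟩
  obtain ⟨s, hs⟩ := exists_norm_apply_eq_norm f
  obtain ⟨φ, hφ, hφs⟩ := exists_dual_vector'' 𝕜 (f s)
  obtain ⟨t, htΓ, ht⟩ := hf φ
  refine ⟨t, htΓ, (f.norm_coe_le_norm t).antisymm ?_⟩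
  calc ‖f‖ = ‖φ (f s)‖ := by rw [hφs, RCLike.norm_ofReal, abs_norm, hs]
    _ ≤ ‖(φ : C(X, 𝕜)).comp f‖ := ((φ : C(X, 𝕜)).comp f).norm_coe_le_norm s
    _ = ‖φ (f t)‖ := ht.symm
    _ ≤ ‖f t‖ := (φ.le_of_opNorm_le hφ (f t)).trans_eq (one_mul _)

end NormAttainment

theorem stmt_14_general {K X : Type*} [TopologicalSpace K] [CompactSpace K]
    [SeminormedAddCommGroup X] [NormedSpace ℝ X] [UniformConvexSpace X]
    {S : Submodule ℝ C(K, X)} {Γ : Set K} (hΓclosed : IsClosed Γ)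
    (hΓnorm : ∀ g ∈ S, ∃ t ∈ Γ, ‖g t‖ = ‖g‖)
    {f : S} (hf : IsDeltaPoint f) :
    ∃ t₀ ∈ Γ, t₀ ∈ closure (Γ \ {t₀}) ∧ ‖f.1 t₀‖ = 1 := by
  by_contra! hlim
  have hball : ∀ (g : S), ‖g‖ ≤ 1 → ∀ t, ‖g.1 t‖ ≤ 1 := fun g hg t =>
    (g.1.norm_coe_le_norm t).trans hg
  let F : Set K := {t ∈ Γ | ‖f.1 t‖ = 1}
  have hF_lim : ∀ t ∈ F, t ∉ closure (Γ \ {t}) := fun t ht htΓ => hlim t ht.1 htΓ ht.2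
  have hF_closed : IsClosed F := hΓclosed.inter (isClosed_eq (by fun_prop) continuous_const)
  have hF_finite : F.Finite :=
    finite_of_forall_notMem_closure_sdiff hF_closed.isCompact (Set.sep_subset _ _) hF_lim
  obtain ⟨c, hc, hfc⟩ : ∃ c < 1, ∀ t ∈ Γ \ F, ‖f.1 t‖ ≤ c :=
    (isClosed_sdiff_of_forall_notMem_closure_sdiff hΓclosed hF_lim).isCompact.exists_forall_le'
      (α := ℝᵒᵈ) (f := fun t => ‖f.1 t‖) (by fun_prop)
      fun t ht => (hball f hf.norm_le_one t).lt_of_ne fun h => ht.2 ⟨ht.1, h⟩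
  obtain ⟨δ, hδ, hconvex⟩ := exists_forall_closedBall_norm_sub_le_two_sub X one_pos
  obtain ⟨ε, hε, hεmin⟩ := exists_between (lt_min hδ (sub_pos.2 hc))
  obtain ⟨hεδ, hεc⟩ := lt_min_iff.1 hεmin
  obtain ⟨g, hg, hfg, hadd⟩ := hf.exists_forall_lt_norm_apply_add hε (s := hF_finite.toFinset)
    (fun t ht => (hF_finite.mem_toFinset.1 ht).2.ge) one_lt_two
  obtain ⟨t, htΓ, ht⟩ := hΓnorm (f - g) (f - g).2
  have hdist : 2 - ε ≤ ‖f.1 t - g.1 t‖ := hfg.trans_eq ht.symm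
  by_cases htF : t ∈ F
  · linarith [hconvex _ _ (hball f hf.norm_le_one t) (hball g hg t)
      (hadd t (hF_finite.mem_toFinset.2 htF)).le]
  · linarith [norm_sub_le (f.1 t) (g.1 t), hfc t ⟨htΓ, htF⟩, hball g hg t]

/- STATEMENT 14: Let `X` be a uniformly convex complex Banach space and `S` an
`X`-valued function space over a uniform algebra on the compact Hausdorff space `K`
with base algebra `A = {x* ∘ f : f ∈ S, x* ∈ X*}`. Let `Γ` be a closed boundary for
`A` in which the strong boundary points of `A` are dense. If `f ∈ S` with `‖f‖ = 1`
is a Δ-point of `S`, then there is a limit point `t₀` of `Γ` with `‖f t₀‖ = 1`. -/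
theorem stmt_14 {K : Type*} [TopologicalSpace K] [CompactSpace K] [T2Space K]
    {X : Type*} [NormedAddCommGroup X] [NormedSpace ℂ X] [CompleteSpace X]
    [UniformConvexSpace X]
    (S : Submodule ℂ C(K, X)) (hSclosed : IsClosed (S : Set C(K, X)))
    (A : Subalgebra ℂ C(K, ℂ))
    (hAbase : (A : Set C(K, ℂ)) =
      {g : C(K, ℂ) | ∃ f ∈ S, ∃ φ : X →L[ℂ] ℂ, ∀ t : K, g t = φ (f t)})
    (hAclosed : IsClosed (A : Set C(K, ℂ)))
    (hAsep : ∀ s t : K, s ≠ t → ∃ g ∈ A, g s ≠ g t)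
    (hmul : ∀ φ ∈ A, ∀ f ∈ S, φ • f ∈ S)
    (Γ : Set K) (hΓclosed : IsClosed Γ)
    (hΓbd : ∀ g ∈ A, ∃ t ∈ Γ, ‖g t‖ = ‖g‖)
    (hΓdense : Γ ⊆ closure {t | t ∈ Γ ∧ IsStrongBoundaryPoint A t})
    (f : C(K, X)) (hfS : f ∈ S) (hf1 : ‖f‖ = 1)
    (hΔ : ∀ ε > (0 : ℝ), (⟨f, hfS⟩ : S) ∈
      closure (convexHull ℝ {g : S | ‖g‖ ≤ 1 ∧ 2 - ε ≤ ‖(⟨f, hfS⟩ : S) - g‖})) :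
    ∃ t₀ ∈ Γ, t₀ ∈ closure (Γ \ {t₀}) ∧ ‖f t₀‖ = 1 := by
  exact stmt_14_general (S := S.restrictScalars ℝ) (f := ⟨f, hfS⟩) hΓclosed
    (fun g hg => exists_mem_norm_apply_eq_norm_of_dual ℂ g fun φ =>
      hΓbd ((φ : C(X, ℂ)).comp g) (hAbase.symm.subset ⟨g, hg, φ, fun _ => rfl⟩)) hΔ
end

section
/- Let A be a uniform algebra on a compact Hausdorff space K and let Γ ⊆ K be a closed boundary for A in which the set of strong boundary points of A is dense (these properties hold for the Shilov boundary of A). Then the following are equivalent: (i) A has the Daugavet property (every rank-one bounded linear operator T : A → A satisfies ‖I + T‖ = 1 + ‖T‖); (ii) A has the diametral diameter two property (for every relatively weakly open subset U of B_A, every f ∈ U with ‖f‖_∞ = 1, and every ε > 0, there exists g ∈ U with ‖f − g‖_∞ ≥ 2 − ε); (iii) A has the diametral local diameter two property (for every slice S of B_A, every f ∈ S with ‖f‖_∞ = 1, and every ε > 0, there exists g ∈ S with ‖f − g‖_∞ ≥ 2 − ε); (iv) Γ has no isolated points. -/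
set_option maxHeartbeats 1000000
set_option synthInstance.maxHeartbeats 1000000

/-!
If `t₀` is isolated in `Γ`, a function of `A` peaking at `t₀` is a norm-one element that is small on
`Γ \ {t₀}`, and no member of a thin slice given by evaluation at `t₀` is far from it.

If `Γ` has no isolated points, every open set meeting `Γ` contains bumps of `A` at infinitely many
points, and essentially disjoint bumps tend weakly to zero. Hence subtracting `f t₀ • p` from `f`
for a suitable bump `p` near `t₀`, and then adding `b • q` for a second bump `q` near a point where
the difference is small, changes `f` little in the weak topology, almost preserves the unit ball,
and produces any prescribed value `b` of the closed unit disk near `t₀`. Choosing `b` opposite to a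
value of largest modulus of a given `g ∈ A` puts the modified function at distance almost `‖g‖ + 1`
from `g`. So every point of the unit ball is a weak limit of points of the ball that are almost as
far from `g` as the triangle inequality allows, which yields both the Daugavet property and the
diametral diameter two property.
-/

open Filter Topology

section WeakNhds

variable {α 𝕜 E : Type*} [NontriviallyNormedField 𝕜] [SeminormedAddCommGroup E] [NormedSpace 𝕜 E]

variable (𝕜) in
/-- The filter of weak neighborhoods of `x`, on `E` itself rather than on its copy
`WeakSpace 𝕜 E`. -/
noncomputable def weakNhds (x : E) : Filter E :=
  (𝓝 (toWeakSpace 𝕜 E x)).comap (toWeakSpace 𝕜 E)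

theorem tendsto_weakNhds_iff {l : Filter α} {u : α → E} {x : E} :
    Tendsto u l (weakNhds 𝕜 x) ↔ ∀ φ : E →L[𝕜] 𝕜, Tendsto (fun i => φ (u i)) l (𝓝 (φ x)) := by
  have inducing_eval : IsInducing fun (y : WeakSpace 𝕜 E) (φ : E →L[𝕜] 𝕜) =>
      φ ((toWeakSpace 𝕜 E).symm y) := ⟨rfl⟩
  rw [weakNhds, tendsto_comap_iff, inducing_eval.tendsto_nhds_iff, tendsto_pi_nhds]
  rfl

theorem tendsto_apply_weakNhds (φ : E →L[𝕜] 𝕜) (x : E) : Tendsto φ (weakNhds 𝕜 x) (𝓝 (φ x)) :=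
  tendsto_weakNhds_iff.1 tendsto_id φ

theorem tendsto_add_smul_weakNhds (x : E) (c : 𝕜) :
    Tendsto (fun p => x + c • p) (weakNhds 𝕜 0) (weakNhds 𝕜 x) :=
  tendsto_weakNhds_iff.2 fun φ => by
    simpa using ((tendsto_apply_weakNhds φ 0).const_mul c).const_add (φ x)

theorem tendsto_smul_weakNhds (x : E) :
    Tendsto (fun q : 𝕜 × E => q.1 • q.2) (𝓝 1 ×ˢ weakNhds 𝕜 x) (weakNhds 𝕜 x) :=
  tendsto_weakNhds_iff.2 fun φ => by
    simpa using (tendsto_fst (f := 𝓝 (1 : 𝕜))).mul ((tendsto_apply_weakNhds φ x).comp tendsto_snd)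

theorem frequently_frequently_weakNhds {x : E} {P : E → Prop}
    (h : ∃ᶠ y in weakNhds 𝕜 x, ∃ᶠ z in weakNhds 𝕜 y, P z) : ∃ᶠ z in weakNhds 𝕜 x, P z := by
  simp only [weakNhds, frequently_comap] at h ⊢
  refine frequently_frequently_nhds.1 (h.mono ?_)
  rintro _ ⟨y, rfl, hy⟩
  exact hy

end WeakNhds

section RotatedSums

variable {ι 𝕜 E : Type*} [RCLike 𝕜] [SeminormedAddCommGroup E] [NormedSpace 𝕜 E]

theorem sum_norm_apply_le_of_norm_rotated_sum_le {x : ι → E} {s : Finset ι} {C : ℝ}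
    (hx : ∀ c : ι → 𝕜, (∀ i, ‖c i‖ = 1) → ‖∑ i ∈ s, c i • x i‖ ≤ C) (φ : E →L[𝕜] 𝕜) :
    ∑ i ∈ s, ‖φ (x i)‖ ≤ ‖φ‖ * C := by
  choose c norm_c c_mul using fun i => RCLike.exists_norm_eq_mul_self (φ (x i))
  have apply_sum : φ (∑ i ∈ s, c i • x i) = ((∑ i ∈ s, ‖φ (x i)‖ : ℝ) : 𝕜) := by
    simp only [map_sum, map_smul, smul_eq_mul, ← c_mul]
  calc ∑ i ∈ s, ‖φ (x i)‖ = ‖φ (∑ i ∈ s, c i • x i)‖ := by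
        rw [apply_sum, RCLike.norm_of_nonneg (Finset.sum_nonneg fun _ _ => norm_nonneg _)]
    _ ≤ ‖φ‖ * C := φ.le_opNorm_of_le (hx c norm_c)

theorem tendsto_weakNhds_zero_of_norm_rotated_sum_le {x : ι → E} {C : ℝ}
    (hx : ∀ (s : Finset ι) (c : ι → 𝕜), (∀ i, ‖c i‖ = 1) → ‖∑ i ∈ s, c i • x i‖ ≤ C) :
    Tendsto x cofinite (weakNhds 𝕜 0) := by
  refine tendsto_weakNhds_iff.2 fun φ => ?_
  have summable_apply : Summable fun i => ‖φ (x i)‖ :=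
    summable_of_sum_le (fun _ => norm_nonneg _) fun s =>
      sum_norm_apply_le_of_norm_rotated_sum_le (hx s) φ
  simpa using tendsto_zero_iff_norm_tendsto_zero.2 summable_apply.tendsto_cofinite_zero

end RotatedSums

section DiametralProperties

variable (𝕜 E : Type*) [RCLike 𝕜] [NormedAddCommGroup E] [NormedSpace 𝕜 E]

/-- The Daugavet property of a normed space, with the rank-one operators written as `ψ(·) • g`. -/
def HasDaugavetProperty : Prop :=
  ∀ (ψ : E →L[𝕜] 𝕜) (g : E), ψ ≠ 0 → g ≠ 0 →
    ‖ContinuousLinearMap.id 𝕜 E + ψ.smulRight g‖ = 1 + ‖ψ.smulRight g‖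

/-- The diametral diameter two property: in every relatively weakly open subset of the unit ball,
each norm-one point has points of the subset at distance almost two. -/
def HasDiametralDiameterTwoProperty : Prop :=
  ∀ W : Set (WeakSpace 𝕜 E), IsOpen W →
    ∀ f ∈ (⇑(toWeakSpace 𝕜 E) ⁻¹' W) ∩ Metric.closedBall (0 : E) 1, ‖f‖ = 1 →
      ∀ ε > (0 : ℝ),
        ∃ g ∈ (⇑(toWeakSpace 𝕜 E) ⁻¹' W) ∩ Metric.closedBall (0 : E) 1, 2 - ε ≤ ‖f - g‖

/-- The diametral local diameter two property: the diametral diameter two property for slices of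
the unit ball only. -/
def HasDiametralLocalDiameterTwoProperty : Prop :=
  ∀ ψ : E →L[𝕜] 𝕜, ‖ψ‖ = 1 → ∀ δ > (0 : ℝ),
    ∀ f : E, ‖f‖ ≤ 1 → 1 - δ < RCLike.re (ψ f) → ‖f‖ = 1 →
      ∀ ε > (0 : ℝ),
        ∃ g : E, ‖g‖ ≤ 1 ∧ 1 - δ < RCLike.re (ψ g) ∧ 2 - ε ≤ ‖f - g‖

/-- Every point `f` of the unit ball is in the weak closure of the points `k` of the ball whose
distance to a given vector `g` is almost `‖g‖ + 1`. This is Shvydkoy's form of the Daugavet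
property. -/
def HasFarWeakApproximants : Prop :=
  ∀ f g : E, ‖f‖ ≤ 1 → ∀ ε > (0 : ℝ),
    ∃ᶠ k in weakNhds 𝕜 f, ‖k‖ ≤ 1 ∧ ‖g‖ + 1 - ε ≤ ‖g - k‖

variable {𝕜 E}

theorem norm_sub_ofReal_smul {r : ℝ} (hr : r ≤ 1) (x : E) : ‖x - (r : 𝕜) • x‖ = (1 - r) * ‖x‖ := by
  have factor : x - (r : 𝕜) • x = ((1 - r : ℝ) : 𝕜) • x := by
    rw [RCLike.ofReal_sub, RCLike.ofReal_one, sub_smul, one_smul]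
  rw [factor, norm_smul, RCLike.norm_of_nonneg (sub_nonneg.2 hr)]

theorem norm_inv_one_add_smul_le {k : E} {η : ℝ} (hη : 0 < η) (hk : ‖k‖ ≤ 1 + η) :
    ‖(((1 + η)⁻¹ : ℝ) : 𝕜) • k‖ ≤ 1 := by
  have pos : 0 < 1 + η := by positivity
  rw [norm_smul, RCLike.norm_of_nonneg (inv_nonneg.2 pos.le)]
  exact inv_mul_le_one_of_le₀ hk pos.le

theorem norm_sub_inv_one_add_smul_le {k : E} {η : ℝ} (hη : 0 < η) (hk : ‖k‖ ≤ 1 + η) :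
    ‖k - (((1 + η)⁻¹ : ℝ) : 𝕜) • k‖ ≤ η := by
  have inv_le_one : (1 + η)⁻¹ ≤ 1 := inv_le_one_of_one_le₀ (by linarith)
  calc ‖k - (((1 + η)⁻¹ : ℝ) : 𝕜) • k‖ = (1 - (1 + η)⁻¹) * ‖k‖ := norm_sub_ofReal_smul inv_le_one k
    _ ≤ (1 - (1 + η)⁻¹) * (1 + η) := by gcongr
    _ = η := by field_simp; ring

theorem HasFarWeakApproximants.of_almost_unitBall
    (h : ∀ f g : E, ‖f‖ ≤ 1 → ∀ η > (0 : ℝ),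
      ∃ᶠ k in weakNhds 𝕜 f, ‖k‖ ≤ 1 + η ∧ ‖g‖ + 1 - η ≤ ‖g - k‖) :
    HasFarWeakApproximants 𝕜 E := by
  intro f g hf ε hε
  by_contra none_far
  have none_far_smul := ((tendsto_smul_weakNhds f).eventually
    (not_frequently.1 none_far)).curry
  have tendsto_scalar : Tendsto (fun η : ℝ => (((1 + η)⁻¹ : ℝ) : 𝕜)) (𝓝[>] 0) (𝓝 1) := by
    have continuousAt_inv : ContinuousAt (fun η : ℝ => (1 + η)⁻¹) 0 :=
      (by fun_prop : ContinuousAt (fun η : ℝ => 1 + η) 0).inv₀ (by norm_num)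
    have := RCLike.continuous_ofReal.continuousAt.comp (g := ((↑) : ℝ → 𝕜)) continuousAt_inv
    simpa [ContinuousAt, Function.comp_def] using tendsto_nhdsWithin_of_tendsto_nhds this
  obtain ⟨η, none_far_η, hη, hηε⟩ := ((tendsto_scalar.eventually none_far_smul).and
    (Ioo_mem_nhdsGT (half_pos hε))).exists
  obtain ⟨k, ⟨hk, far⟩, not_far⟩ := ((h f g hf η hη).and_eventually none_far_η).exists
  refine not_far ⟨norm_inv_one_add_smul_le hη hk, ?_⟩
  have close := norm_sub_inv_one_add_smul_le (𝕜 := 𝕜) hη hk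
  have triangle := norm_sub_le_norm_sub_add_norm_sub g ((((1 + η)⁻¹ : ℝ) : 𝕜) • k) k
  rw [norm_sub_rev (_ • k)] at triangle
  linarith

theorem HasFarWeakApproximants.one_add_norm_smulRight_apply_le (h : HasFarWeakApproximants 𝕜 E)
    (ψ : E →L[𝕜] 𝕜) (g : E) {f : E} (hf : ‖f‖ ≤ 1) :
    1 + ‖ψ.smulRight g f‖ ≤ ‖ContinuousLinearMap.id 𝕜 E + ψ.smulRight g‖ := by
  set T := ψ.smulRight g
  refine le_of_forall_pos_le_add fun ε hε => ?_
  have apply_near : ∀ᶠ k in weakNhds 𝕜 f, ‖T k - T f‖ < ε / 2 := by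
    have tendsto_apply : Tendsto T (weakNhds 𝕜 f) (𝓝 (T f)) :=
      (tendsto_apply_weakNhds ψ f).smul_const g
    simpa only [dist_eq_norm] using Metric.tendsto_nhds.1 tendsto_apply _ (half_pos hε)
  obtain ⟨k, ⟨hk, far⟩, near⟩ :=
    ((h f (-T f) hf _ (half_pos hε)).and_eventually apply_near).exists
  calc 1 + ‖T f‖ ≤ ‖-T f - k‖ + ε / 2 := by rw [norm_neg] at far; linarith
    _ = ‖(k + T k) - (T k - T f)‖ + ε / 2 := by rw [← norm_neg]; congr 2; abel
    _ ≤ ‖k + T k‖ + ‖T k - T f‖ + ε / 2 := by gcongr; exact norm_sub_le _ _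
    _ ≤ ‖ContinuousLinearMap.id 𝕜 E + T‖ + ε := by
      have := (ContinuousLinearMap.id 𝕜 E + T).unit_le_opNorm k hk
      rw [add_apply, ContinuousLinearMap.id_apply] at this
      linarith

theorem HasFarWeakApproximants.hasDaugavetProperty (h : HasFarWeakApproximants 𝕜 E) :
    HasDaugavetProperty 𝕜 E := by
  intro ψ g _ _
  refine le_antisymm ((norm_add_le _ _).trans ?_) ?_
  · gcongr
    exact ContinuousLinearMap.norm_id_le
  · rw [← le_sub_iff_add_le']
    refine le_of_forall_lt fun r hr => ?_
    obtain ⟨f, hf, hrf⟩ := (ψ.smulRight g).exists_lt_apply_of_lt_opNorm hr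
    have := h.one_add_norm_smulRight_apply_le ψ g hf.le
    linarith

theorem HasFarWeakApproximants.hasDiametralDiameterTwoProperty
    (h : HasFarWeakApproximants 𝕜 E) : HasDiametralDiameterTwoProperty 𝕜 E := by
  rintro W hW f ⟨hfW, -⟩ hf ε hε
  have mem_weakNhds : toWeakSpace 𝕜 E ⁻¹' W ∈ weakNhds 𝕜 f := preimage_mem_comap (hW.mem_nhds hfW)
  obtain ⟨g, ⟨hg, far⟩, hgW⟩ := ((h f f hf.le ε hε).and_eventually mem_weakNhds).exists
  refine ⟨g, ⟨hgW, mem_closedBall_zero_iff.2 hg⟩, ?_⟩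
  linarith

theorem HasDiametralDiameterTwoProperty.hasDiametralLocalDiameterTwoProperty
    (h : HasDiametralDiameterTwoProperty 𝕜 E) : HasDiametralLocalDiameterTwoProperty 𝕜 E := by
  intro ψ _ δ _ f hf hfψ hf1 ε hε
  have continuous_re : Continuous fun x : WeakSpace 𝕜 E => RCLike.re (ψ x) :=
    RCLike.continuous_re.comp (WeakBilin.eval_continuous (topDualPairing 𝕜 E).flip ψ)
  obtain ⟨g, ⟨hgψ, hg⟩, far⟩ := h _ (isOpen_lt continuous_const continuous_re) f
    ⟨hfψ, mem_closedBall_zero_iff.2 hf⟩ hf1 ε hε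
  exact ⟨g, mem_closedBall_zero_iff.1 hg, hgψ, far⟩

theorem HasDaugavetProperty.exists_norm_sub_smul_gt (h : HasDaugavetProperty 𝕜 E)
    {ψ : E →L[𝕜] 𝕜} (hψ : ‖ψ‖ = 1) {f : E} (hf : ‖f‖ = 1) {η : ℝ} (hη : 0 < η) :
    ∃ y : E, ‖y‖ < 1 ∧ 2 - η < ‖y - ψ y • f‖ := by
  have ψ_ne_zero : ψ ≠ 0 := by rintro rfl; simp at hψ
  have f_ne_zero : -f ≠ 0 := by rw [neg_ne_zero]; rintro rfl; simp at hf
  have norm_eq_two : ‖ContinuousLinearMap.id 𝕜 E + ψ.smulRight (-f)‖ = 2 := by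
    rw [h ψ (-f) ψ_ne_zero f_ne_zero, ContinuousLinearMap.norm_smulRight_apply, norm_neg, hψ, hf]
    norm_num
  obtain ⟨y, hy, far⟩ := ContinuousLinearMap.exists_lt_apply_of_lt_opNorm
    (ContinuousLinearMap.id 𝕜 E + ψ.smulRight (-f)) (r := 2 - η) (by linarith)
  exact ⟨y, hy, by simpa [sub_eq_add_neg] using far⟩

theorem HasDaugavetProperty.hasDiametralLocalDiameterTwoProperty
    (h : HasDaugavetProperty 𝕜 E) : HasDiametralLocalDiameterTwoProperty 𝕜 E := by
  intro ψ hψ δ hδ f _ _ hf ε hε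
  have hη : 0 < min δ (ε / 2) := lt_min hδ (half_pos hε)
  obtain ⟨y, hy, far⟩ := h.exists_norm_sub_smul_gt hψ hf hη
  obtain ⟨c, norm_c, c_mul⟩ := RCLike.exists_norm_eq_mul_self (ψ y)
  have apply_rotated : ψ (c • y) = (‖ψ y‖ : 𝕜) := by rw [map_smul, smul_eq_mul, c_mul]
  have norm_rotated : ‖c • y‖ = ‖y‖ := by rw [norm_smul, norm_c, one_mul]
  have apply_gt : 1 - min δ (ε / 2) < ‖ψ y‖ := by
    have := norm_sub_le y (ψ y • f)
    rw [norm_smul, hf, mul_one] at this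
    linarith
  have apply_le : ‖ψ y‖ ≤ 1 := hψ ▸ ψ.unit_le_opNorm y hy.le
  have rotated_far : 2 - min δ (ε / 2) < ‖c • y - (‖ψ y‖ : 𝕜) • f‖ := by
    rwa [c_mul, mul_smul, ← smul_sub, norm_smul, norm_c, one_mul]
  have defect : ‖f - (‖ψ y‖ : 𝕜) • f‖ = 1 - ‖ψ y‖ := by
    rw [norm_sub_ofReal_smul apply_le, hf, mul_one]
  refine ⟨c • y, norm_rotated.trans_le hy.le, ?_, ?_⟩
  · rw [apply_rotated, RCLike.ofReal_re]
    linarith [min_le_left δ (ε / 2)]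
  · have := norm_sub_le_norm_sub_add_norm_sub (c • y) f ((‖ψ y‖ : 𝕜) • f)
    rw [norm_sub_rev _ f] at this
    linarith [min_le_right δ (ε / 2)]

end DiametralProperties

section DiskPeak

open ComplexConjugate

theorem norm_sub_le_norm_one_sub_conj_mul {w z : ℂ} (hw : ‖w‖ ≤ 1) (hz : ‖z‖ ≤ 1) :
    ‖w - z‖ ≤ ‖1 - conj w * z‖ := by
  have defect : ‖1 - conj w * z‖ ^ 2 - ‖w - z‖ ^ 2 = (1 - ‖w‖ ^ 2) * (1 - ‖z‖ ^ 2) := by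
    simp only [Complex.sq_norm, Complex.normSq_apply, Complex.sub_re, Complex.sub_im,
      Complex.mul_re, Complex.mul_im, Complex.conj_re, Complex.conj_im, Complex.one_re,
      Complex.one_im]
    ring
  have defect_nonneg : 0 ≤ (1 - ‖w‖ ^ 2) * (1 - ‖z‖ ^ 2) :=
    mul_nonneg (sub_nonneg.2 (pow_le_one₀ (norm_nonneg w) hw))
      (sub_nonneg.2 (pow_le_one₀ (norm_nonneg z) hz))
  exact le_of_sq_le_sq (by linarith) (norm_nonneg _)

/-- The Möbius map of the unit disk onto the disk with diameter `[0, 1]` that fixes `1` and sends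
`a` to `1 / 2`. As `a` tends to `1` from below, it tends to zero away from `1`. -/
noncomputable def diskPeak (a : ℝ) (z : ℂ) : ℂ :=
  (1 - a) / 2 * ((1 + z) * (1 - a * z)⁻¹)

variable {a : ℝ} {z : ℂ}

theorem diskPeak_one (ha : a < 1) : diskPeak a 1 = 1 := by
  have : (1 - a : ℂ) ≠ 0 := by exact_mod_cast (sub_pos.2 ha).ne'
  rw [diskPeak, mul_one]
  field_simp
  norm_num

theorem one_sub_le_norm_one_sub_mul {c : ℝ} (ha₀ : 0 ≤ a) (ha₁ : a ≤ 1) (hz : ‖z‖ ≤ c) :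
    1 - c ≤ ‖1 - a * z‖ := by
  have norm_mul_le : ‖a * z‖ ≤ ‖z‖ := by
    rw [norm_mul, Complex.norm_of_nonneg ha₀]
    exact mul_le_of_le_one_left (norm_nonneg z) ha₁
  have := norm_sub_norm_le 1 (a * z)
  rw [norm_one] at this
  linarith

theorem norm_one_sub_two_mul_diskPeak_le (ha₀ : 0 ≤ a) (ha₁ : a < 1) (hz : ‖z‖ ≤ 1) :
    ‖1 - 2 * diskPeak a z‖ ≤ 1 := by
  have denominator_ne_zero : 1 - a * z ≠ 0 := by
    refine sub_ne_zero.2 fun h => ?_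
    have : ‖(a : ℂ) * z‖ < 1 := by
      rw [norm_mul, Complex.norm_of_nonneg ha₀]
      exact mul_lt_one_of_nonneg_of_lt_one_left ha₀ ha₁ hz
    rw [← h, norm_one] at this
    exact this.false
  have eq_quotient : 1 - 2 * diskPeak a z = (a - z) / (1 - a * z) := by
    rw [diskPeak]
    field_simp
    ring
  have := norm_sub_le_norm_one_sub_conj_mul (w := a) (z := z)
    ((Complex.norm_of_nonneg ha₀).trans_le ha₁.le) hz
  rw [Complex.conj_ofReal] at this
  rw [eq_quotient, norm_div]
  exact div_le_one_of_le₀ this (norm_nonneg _)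

theorem norm_diskPeak_le_one (ha₀ : 0 ≤ a) (ha₁ : a < 1) (hz : ‖z‖ ≤ 1) :
    ‖diskPeak a z‖ ≤ 1 := by
  have := norm_sub_le 1 (1 - 2 * diskPeak a z)
  rw [sub_sub_cancel, norm_mul, Complex.norm_two, norm_one] at this
  linarith [norm_one_sub_two_mul_diskPeak_le ha₀ ha₁ hz]

theorem norm_one_sub_diskPeak_le_one (ha₀ : 0 ≤ a) (ha₁ : a < 1) (hz : ‖z‖ ≤ 1) :
    ‖1 - diskPeak a z‖ ≤ 1 := by
  have := norm_add_le 1 (1 - 2 * diskPeak a z)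
  rw [show 1 + (1 - 2 * diskPeak a z) = 2 * (1 - diskPeak a z) by ring, norm_mul,
    Complex.norm_two, norm_one] at this
  linarith [norm_one_sub_two_mul_diskPeak_le ha₀ ha₁ hz]

theorem norm_diskPeak_le_div {c : ℝ} (ha₀ : 0 ≤ a) (ha₁ : a ≤ 1) (hc : c < 1) (hz : ‖z‖ ≤ c) :
    ‖diskPeak a z‖ ≤ (1 - a) / (1 - c) := by
  have norm_factor : ‖((1 - a) / 2 : ℂ)‖ = (1 - a) / 2 := by
    rw [← Complex.norm_of_nonneg (by linarith : 0 ≤ (1 - a) / 2)]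
    push_cast
    rfl
  have norm_numerator : ‖1 + z‖ ≤ 2 := by
    have := norm_add_le 1 z
    rw [norm_one] at this
    linarith
  calc ‖diskPeak a z‖ = (1 - a) / 2 * (‖1 + z‖ * ‖1 - a * z‖⁻¹) := by
        rw [diskPeak, norm_mul, norm_mul, norm_inv, norm_factor]
    _ ≤ (1 - a) / 2 * (2 * (1 - c)⁻¹) := by
        have := one_sub_le_norm_one_sub_mul ha₀ ha₁ hz
        gcongr
    _ = (1 - a) / (1 - c) := by ring

end DiskPeak

section Bumps

variable {K : Type*} [TopologicalSpace K]

/-- `p` is a bump at `t₀`: it takes the value `1` there and is bounded by `ε` off `U`. The condition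
`‖1 - p t‖ ≤ 1` ensures that a value of modulus at most one multiplied by `1 - p` does not grow. -/
structure IsBump (p : C(K, ℂ)) (t₀ : K) (U : Set K) (ε : ℝ) : Prop where
  apply_eq_one : p t₀ = 1
  norm_apply_le_one : ∀ t, ‖p t‖ ≤ 1
  norm_one_sub_apply_le_one : ∀ t, ‖1 - p t‖ ≤ 1
  norm_apply_le : ∀ t ∉ U, ‖p t‖ ≤ ε

theorem IsBump.mono {p : C(K, ℂ)} {t₀ : K} {U V : Set K} {δ ε : ℝ} (hp : IsBump p t₀ U δ)
    (hUV : U ⊆ V) (hδε : δ ≤ ε) : IsBump p t₀ V ε :=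
  { hp with norm_apply_le := fun t ht => (hp.norm_apply_le t fun h => ht (hUV h)).trans hδε }

variable [CompactSpace K] {A : Subalgebra ℂ C(K, ℂ)}

theorem norm_subalgebra_apply_le (f : A) (t : K) : ‖(f : C(K, ℂ)) t‖ ≤ ‖f‖ :=
  ContinuousMap.norm_coe_le_norm (f : C(K, ℂ)) t

theorem exists_subalgebra_eq_diskPeak (hA : IsClosed (A : Set C(K, ℂ))) {h : A} (hh : ‖h‖ ≤ 1)
    {a : ℝ} (ha₀ : 0 ≤ a) (ha₁ : a < 1) :
    ∃ p : A, ∀ t, (p : C(K, ℂ)) t = diskPeak a ((h : C(K, ℂ)) t) := by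
  have : CompleteSpace A := hA.completeSpace_coe
  have norm_lt_one : ‖(a : ℂ) • h‖ < 1 := by
    rw [norm_smul, Complex.norm_of_nonneg ha₀]
    exact mul_lt_one_of_nonneg_of_lt_one_left ha₀ ha₁ hh
  obtain ⟨q, hq⟩ := (isUnit_one_sub_of_norm_lt_one norm_lt_one).exists_right_inv
  refine ⟨((1 - a) / 2 : ℂ) • ((1 + h) * q), fun t => ?_⟩
  have apply_q : (1 - a * (h : C(K, ℂ)) t) * (q : C(K, ℂ)) t = 1 := by
    simpa using congrArg (fun f : A => (f : C(K, ℂ)) t) hq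
  simp [diskPeak, eq_inv_of_mul_eq_one_right apply_q]

theorem IsStrongBoundaryPoint.exists_isBump {t₀ : K} (ht₀ : IsStrongBoundaryPoint A t₀)
    (hA : IsClosed (A : Set C(K, ℂ))) {U : Set K} (hU : IsOpen U) (ht₀U : t₀ ∈ U) {ε : ℝ}
    (hε : 0 < ε) : ∃ p : A, IsBump (p : C(K, ℂ)) t₀ U ε := by
  obtain ⟨h, hhA, h_apply, norm_h, c, hc, h_le⟩ := ht₀ U hU ht₀U
  obtain ⟨a, ha₀, ha₁, ha⟩ : ∃ a : ℝ, 0 ≤ a ∧ a < 1 ∧ 1 - a ≤ ε * (1 - c) := by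
    have : 0 < ε * (1 - c) := mul_pos hε (sub_pos.2 hc)
    exact ⟨max 0 (1 - ε * (1 - c)), le_max_left _ _, max_lt one_pos (by linarith),
      by linarith [le_max_right 0 (1 - ε * (1 - c))]⟩
  obtain ⟨p, hp⟩ := exists_subalgebra_eq_diskPeak hA (h := ⟨h, hhA⟩) norm_h.le ha₀ ha₁
  have norm_apply_h (t : K) : ‖h t‖ ≤ 1 := norm_h ▸ h.norm_coe_le_norm t
  refine ⟨p, ?_, fun t => ?_, fun t => ?_, fun t ht => ?_⟩ <;> rw [hp]
  · rw [h_apply, diskPeak_one ha₁]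
  · exact norm_diskPeak_le_one ha₀ ha₁ (norm_apply_h t)
  · exact norm_one_sub_diskPeak_le_one ha₀ ha₁ (norm_apply_h t)
  · exact (norm_diskPeak_le_div ha₀ ha₁.le hc (h_le t ht)).trans
      ((div_le_iff₀ (sub_pos.2 hc)).2 ha)

end Bumps

section DisjointOpenSets

variable {X : Type*} [TopologicalSpace X]

theorem infinite_inter_of_mem_closure_diff_singleton [T1Space X] {S V : Set X} {x : X}
    (hx : x ∈ closure (S \ {x})) (hV : IsOpen V) (hxV : x ∈ V) : (S ∩ V).Infinite := by
  intro finite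
  have mem : x ∈ closure (V ∩ (S \ {x})) := hV.inter_closure ⟨hxV, hx⟩
  have finite_diff : (V ∩ (S \ {x})).Finite := finite.subset fun y hy => ⟨hy.2.1, hy.1⟩
  rw [finite_diff.isClosed.closure_eq] at mem
  exact mem.2.2 rfl

theorem exists_seq_isOpen_pairwise_disjoint_inter [T2Space X] {S V : Set X} (hV : IsOpen V)
    (hSV : (S ∩ V).Infinite) :
    ∃ U : ℕ → Set X, (∀ n, IsOpen (U n) ∧ U n ⊆ V ∧ (S ∩ U n).Nonempty) ∧
      Pairwise fun m n => Disjoint (S ∩ U m) (S ∩ U n) := by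
  have := hSV.to_subtype
  obtain ⟨O, O_infinite, O_open, O_disjoint⟩ :=
    exists_seq_infinite_isOpen_pairwise_disjoint (S ∩ V : Set X)
  choose U U_open preimage_U using fun n => isOpen_induced_iff.1 (O_open n)
  have mem_O {n : ℕ} (y : (S ∩ V : Set X)) : y ∈ O n ↔ (y : X) ∈ U n := by
    rw [← preimage_U n, Set.mem_preimage]
  refine ⟨fun n => U n ∩ V, fun n => ⟨(U_open n).inter hV, Set.inter_subset_right, ?_⟩,
    fun m n hmn => Set.disjoint_left.2 ?_⟩
  · obtain ⟨y, hy⟩ := (O_infinite n).nonempty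
    exact ⟨y, y.2.1, (mem_O y).1 hy, y.2.2⟩
  · rintro y ⟨hyS, hym, hyV⟩ ⟨-, hyn, -⟩
    exact Set.disjoint_left.1 (O_disjoint hmn) ((mem_O ⟨y, hyS, hyV⟩).2 hym) ((mem_O _).2 hyn)

theorem sum_le_one_add_sum_of_pairwise_disjoint {ι α : Type*} {U : ι → Set α}
    (hU : Pairwise fun i j => Disjoint (U i) (U j)) {u δ : ι → ℝ} {x : α}
    (hu : ∀ i, u i ≤ 1) (huδ : ∀ i, x ∉ U i → u i ≤ δ i) (hδ : ∀ i, 0 ≤ δ i) (s : Finset ι) :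
    ∑ i ∈ s, u i ≤ 1 + ∑ i ∈ s, δ i := by
  classical
  have card_le_one : (s.filter fun i => x ∈ U i).card ≤ 1 := by
    refine Finset.card_le_one.2 fun i hi j hj => hU.eq ?_
    exact Set.not_disjoint_iff.2 ⟨x, (Finset.mem_filter.1 hi).2, (Finset.mem_filter.1 hj).2⟩
  have le_indicator (i : ι) : u i ≤ (if x ∈ U i then 1 else 0) + δ i := by
    split_ifs with hi
    · linarith [hu i, hδ i]
    · linarith [huδ i hi]
  calc ∑ i ∈ s, u i ≤ ∑ i ∈ s, ((if x ∈ U i then 1 else 0) + δ i) :=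
        Finset.sum_le_sum fun i _ => le_indicator i
    _ = (s.filter fun i => x ∈ U i).card + ∑ i ∈ s, δ i := by
        rw [Finset.sum_add_distrib, Finset.sum_boole]
    _ ≤ 1 + ∑ i ∈ s, δ i := by gcongr; exact_mod_cast card_le_one

end DisjointOpenSets

section Boundary

variable {K : Type*} [TopologicalSpace K] [CompactSpace K] {A : Subalgebra ℂ C(K, ℂ)} {Γ : Set K}

/-- `Γ` is a boundary for `A`: every function of `A` attains its norm on `Γ`. -/
def IsBoundary (A : Subalgebra ℂ C(K, ℂ)) (Γ : Set K) : Prop :=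
  ∀ g ∈ A, ∃ t ∈ Γ, ‖g t‖ = ‖g‖

theorem IsBoundary.norm_le (hΓ : IsBoundary A Γ) {f : A} {C : ℝ}
    (h : ∀ t ∈ Γ, ‖(f : C(K, ℂ)) t‖ ≤ C) : ‖f‖ ≤ C := by
  obtain ⟨t, ht, norm_apply⟩ := hΓ f f.2
  exact norm_apply.symm.trans_le (h t ht)

theorem IsBoundary.tendsto_weakNhds_zero {ι : Type*} (hΓ : IsBoundary A Γ) {p : ι → A} {C : ℝ}
    (hp : ∀ t ∈ Γ, ∀ s : Finset ι, ∑ i ∈ s, ‖(p i : C(K, ℂ)) t‖ ≤ C) :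
    Tendsto p cofinite (weakNhds ℂ 0) := by
  refine tendsto_weakNhds_zero_of_norm_rotated_sum_le (C := C) fun s c hc =>
    hΓ.norm_le fun t ht => ?_
  calc ‖((∑ i ∈ s, c i • p i : A) : C(K, ℂ)) t‖ = ‖∑ i ∈ s, c i * (p i : C(K, ℂ)) t‖ := by
        simp [ContinuousMap.sum_apply]
    _ ≤ ∑ i ∈ s, ‖c i * (p i : C(K, ℂ)) t‖ := norm_sum_le _ _
    _ = ∑ i ∈ s, ‖(p i : C(K, ℂ)) t‖ := by simp only [norm_mul, hc, one_mul]
    _ ≤ C := hp t ht s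

theorem exists_isBump_of_inter_nonempty (hA : IsClosed (A : Set C(K, ℂ)))
    (hdense : Γ ⊆ closure {t | t ∈ Γ ∧ IsStrongBoundaryPoint A t}) {U : Set K} (hU : IsOpen U)
    (hΓU : (Γ ∩ U).Nonempty) {ε : ℝ} (hε : 0 < ε) :
    ∃ p : A, ∃ t ∈ Γ ∩ U, IsBump (p : C(K, ℂ)) t U ε := by
  obtain ⟨t₀, ht₀, ht₀U⟩ := hΓU
  obtain ⟨t, htU, htΓ, strong⟩ := mem_closure_iff.1 (hdense ht₀) U hU ht₀U
  obtain ⟨p, hp⟩ := strong.exists_isBump hA hU htU hε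
  exact ⟨p, t, ⟨htΓ, htU⟩, hp⟩

theorem IsBoundary.frequently_isBump [T2Space K] (hΓ : IsBoundary A Γ)
    (hA : IsClosed (A : Set C(K, ℂ)))
    (hdense : Γ ⊆ closure {t | t ∈ Γ ∧ IsStrongBoundaryPoint A t}) {V : Set K} (hV : IsOpen V)
    (hΓV : (Γ ∩ V).Infinite) {ε : ℝ} (hε : 0 < ε) :
    ∃ᶠ p : A in weakNhds ℂ 0, ∃ t ∈ Γ ∩ V, IsBump (p : C(K, ℂ)) t V ε := by
  obtain ⟨U, hU, U_disjoint⟩ := exists_seq_isOpen_pairwise_disjoint_inter hV hΓV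
  obtain ⟨δ, δ_pos, c, δ_sum, hc⟩ := posSumOfEncodable hε ℕ
  have δ_nonneg (n : ℕ) : 0 ≤ δ n := (δ_pos n).le
  choose p x hx hp using fun n =>
    exists_isBump_of_inter_nonempty hA hdense (hU n).1 (hU n).2.2 (δ_pos n)
  have tendsto_p : Tendsto p cofinite (weakNhds ℂ 0) := by
    refine hΓ.tendsto_weakNhds_zero (C := 1 + ε) fun t ht s => ?_
    calc ∑ n ∈ s, ‖(p n : C(K, ℂ)) t‖ ≤ 1 + ∑ n ∈ s, δ n :=
          sum_le_one_add_sum_of_pairwise_disjoint U_disjoint (fun n => (hp n).norm_apply_le_one t)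
            (fun n hn => (hp n).norm_apply_le t fun h => hn ⟨ht, h⟩) δ_nonneg s
      _ ≤ 1 + ε := by
          gcongr
          exact (sum_le_hasSum s (fun n _ => δ_nonneg n) δ_sum).trans hc
  refine tendsto_p.frequently (Frequently.of_forall fun n => ?_)
  exact ⟨x n, ⟨(hx n).1, (hU n).2.1 (hx n).2⟩,
    (hp n).mono (hU n).2.1 ((le_hasSum δ_sum n fun m _ => δ_nonneg m).trans hc)⟩

end Boundary

section Modification

variable {K : Type*} [TopologicalSpace K] [CompactSpace K] {A : Subalgebra ℂ C(K, ℂ)}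

theorem IsBump.norm_sub_smul_le {p f : A} {t : K} {U : Set K} {η : ℝ}
    (hp : IsBump (p : C(K, ℂ)) t U η) (hf : ‖f‖ ≤ 1) {a : ℂ} (ha : ‖a‖ ≤ 1)
    (hfa : ∀ s ∈ U, ‖(f : C(K, ℂ)) s - a‖ ≤ η) : ‖f - a • p‖ ≤ 1 + η := by
  have : Nonempty K := ⟨t⟩
  refine (ContinuousMap.norm_le_of_nonempty _).2 fun s => ?_
  change ‖(f : C(K, ℂ)) s - a * (p : C(K, ℂ)) s‖ ≤ 1 + η
  by_cases hs : s ∈ U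
  · calc ‖(f : C(K, ℂ)) s - a * (p : C(K, ℂ)) s‖
        = ‖a * (1 - (p : C(K, ℂ)) s) + ((f : C(K, ℂ)) s - a)‖ := by ring_nf
      _ ≤ ‖a‖ * ‖1 - (p : C(K, ℂ)) s‖ + ‖(f : C(K, ℂ)) s - a‖ := norm_mul a _ ▸ norm_add_le _ _
      _ ≤ 1 + η := add_le_add
          (mul_le_one₀ ha (norm_nonneg _) (hp.norm_one_sub_apply_le_one s)) (hfa s hs)
  · calc ‖(f : C(K, ℂ)) s - a * (p : C(K, ℂ)) s‖
        ≤ ‖(f : C(K, ℂ)) s‖ + ‖a‖ * ‖(p : C(K, ℂ)) s‖ := norm_mul a _ ▸ norm_sub_le _ _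
      _ ≤ 1 + η := add_le_add ((norm_subalgebra_apply_le f s).trans hf)
          ((mul_le_of_le_one_left (norm_nonneg _) ha).trans (hp.norm_apply_le s hs))

theorem IsBump.norm_add_smul_le {p f : A} {t : K} {U : Set K} {η C : ℝ}
    (hp : IsBump (p : C(K, ℂ)) t U η) (hC : 1 ≤ C) (hf : ‖f‖ ≤ C) {b : ℂ} (hb : ‖b‖ ≤ 1)
    (hfη : ∀ s ∈ U, ‖(f : C(K, ℂ)) s‖ ≤ η) : ‖f + b • p‖ ≤ C + η := by
  have : Nonempty K := ⟨t⟩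
  refine (ContinuousMap.norm_le_of_nonempty _).2 fun s => ?_
  calc ‖(f : C(K, ℂ)) s + b * (p : C(K, ℂ)) s‖
      ≤ ‖(f : C(K, ℂ)) s‖ + ‖b‖ * ‖(p : C(K, ℂ)) s‖ := norm_mul b _ ▸ norm_add_le _ _
    _ ≤ ‖(f : C(K, ℂ)) s‖ + ‖(p : C(K, ℂ)) s‖ := by
        gcongr
        exact mul_le_of_le_one_left (norm_nonneg _) hb
    _ ≤ C + η := by
        by_cases hs : s ∈ U
        · linarith [hfη s hs, hp.norm_apply_le_one s]
        · linarith [hp.norm_apply_le s hs, norm_subalgebra_apply_le f s]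

end Modification

theorem exists_norm_eq_one_norm_sub_eq_add_one {𝕜 : Type*} [RCLike 𝕜] (z : 𝕜) :
    ∃ b : 𝕜, ‖b‖ = 1 ∧ ‖z - b‖ = ‖z‖ + 1 := by
  obtain ⟨c, norm_c, c_mul⟩ := RCLike.exists_norm_mul_eq_self z
  refine ⟨-c, by rwa [norm_neg], ?_⟩
  have factor : z - -c = c * ((‖z‖ + 1 : ℝ) : 𝕜) := by
    push_cast
    rw [mul_add, c_mul, mul_one, sub_neg_eq_add]
  rw [factor, norm_mul, norm_c, one_mul, RCLike.norm_of_nonneg (by positivity)]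

section NoIsolatedPoints

variable {K : Type*} [TopologicalSpace K] [CompactSpace K] [T2Space K] {A : Subalgebra ℂ C(K, ℂ)}
  {Γ V : Set K} {f : A} {η : ℝ}

theorem IsBoundary.frequently_small_value (hΓ : IsBoundary A Γ)
    (hA : IsClosed (A : Set C(K, ℂ)))
    (hdense : Γ ⊆ closure {t | t ∈ Γ ∧ IsStrongBoundaryPoint A t})
    (hperfect : ∀ t ∈ Γ, t ∈ closure (Γ \ {t})) (hV : IsOpen V) (hΓV : (Γ ∩ V).Nonempty)
    (hf : ‖f‖ ≤ 1) (hη : 0 < η) :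
    ∃ᶠ k : A in weakNhds ℂ f, ‖k‖ ≤ 1 + η ∧ ∃ t ∈ Γ ∩ V, ‖(k : C(K, ℂ)) t‖ < η := by
  obtain ⟨t₀, ht₀Γ, ht₀V⟩ := hΓV
  set a := (f : C(K, ℂ)) t₀
  have norm_a : ‖a‖ ≤ 1 := (norm_subalgebra_apply_le f t₀).trans hf
  have U_open : IsOpen (V ∩ {t | ‖(f : C(K, ℂ)) t - a‖ < η}) :=
    hV.inter (isOpen_lt (by fun_prop) continuous_const)
  have U_infinite := infinite_inter_of_mem_closure_diff_singleton (hperfect t₀ ht₀Γ) U_open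
    ⟨ht₀V, by simpa [a] using hη⟩
  refine (tendsto_add_smul_weakNhds f (-a)).frequently
    ((hΓ.frequently_isBump hA hdense U_open U_infinite hη).mono ?_)
  rintro p ⟨t, ⟨htΓ, htV, hta⟩, hp⟩
  rw [neg_smul, ← sub_eq_add_neg]
  refine ⟨hp.norm_sub_smul_le hf norm_a fun s hs => hs.2.le, t, ⟨htΓ, htV⟩, ?_⟩
  change ‖(f : C(K, ℂ)) t - a * (p : C(K, ℂ)) t‖ < η
  rwa [hp.apply_eq_one, mul_one]

theorem IsBoundary.frequently_near_value_of_small (hΓ : IsBoundary A Γ)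
    (hA : IsClosed (A : Set C(K, ℂ)))
    (hdense : Γ ⊆ closure {t | t ∈ Γ ∧ IsStrongBoundaryPoint A t})
    (hperfect : ∀ t ∈ Γ, t ∈ closure (Γ \ {t})) (hV : IsOpen V) {C : ℝ} (hC : 1 ≤ C)
    (hf : ‖f‖ ≤ C) (hη : 0 < η) (hfη : ∃ t ∈ Γ ∩ V, ‖(f : C(K, ℂ)) t‖ < η) {b : ℂ}
    (hb : ‖b‖ ≤ 1) :
    ∃ᶠ k : A in weakNhds ℂ f, ‖k‖ ≤ C + η ∧ ∃ t ∈ V, ‖(k : C(K, ℂ)) t - b‖ < η := by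
  obtain ⟨t₀, ⟨ht₀Γ, ht₀V⟩, small⟩ := hfη
  have U_open : IsOpen (V ∩ {t | ‖(f : C(K, ℂ)) t‖ < η}) :=
    hV.inter (isOpen_lt (by fun_prop) continuous_const)
  have U_infinite :=
    infinite_inter_of_mem_closure_diff_singleton (hperfect t₀ ht₀Γ) U_open ⟨ht₀V, small⟩
  refine (tendsto_add_smul_weakNhds f b).frequently
    ((hΓ.frequently_isBump hA hdense U_open U_infinite hη).mono ?_)
  rintro p ⟨t, ⟨-, htV, htη⟩, hp⟩
  refine ⟨hp.norm_add_smul_le hC hf hb fun s hs => hs.2.le, t, htV, ?_⟩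
  change ‖(f : C(K, ℂ)) t + b * (p : C(K, ℂ)) t - b‖ < η
  rwa [hp.apply_eq_one, mul_one, add_sub_cancel_right]

theorem IsBoundary.frequently_near_value (hΓ : IsBoundary A Γ)
    (hA : IsClosed (A : Set C(K, ℂ)))
    (hdense : Γ ⊆ closure {t | t ∈ Γ ∧ IsStrongBoundaryPoint A t})
    (hperfect : ∀ t ∈ Γ, t ∈ closure (Γ \ {t})) (hV : IsOpen V) (hΓV : (Γ ∩ V).Nonempty)
    (hf : ‖f‖ ≤ 1) (hη : 0 < η) {b : ℂ} (hb : ‖b‖ ≤ 1) :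
    ∃ᶠ k : A in weakNhds ℂ f, ‖k‖ ≤ 1 + 2 * η ∧ ∃ t ∈ V, ‖(k : C(K, ℂ)) t - b‖ < η := by
  refine frequently_frequently_weakNhds
    ((hΓ.frequently_small_value hA hdense hperfect hV hΓV hf hη).mono ?_)
  rintro k ⟨norm_k, small⟩
  rw [two_mul, ← add_assoc]
  exact hΓ.frequently_near_value_of_small hA hdense hperfect hV (by linarith) norm_k hη small hb

theorem IsBoundary.hasFarWeakApproximants (hΓ : IsBoundary A Γ)
    (hA : IsClosed (A : Set C(K, ℂ)))
    (hdense : Γ ⊆ closure {t | t ∈ Γ ∧ IsStrongBoundaryPoint A t})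
    (hperfect : ∀ t ∈ Γ, t ∈ closure (Γ \ {t})) : HasFarWeakApproximants ℂ A := by
  refine .of_almost_unitBall fun f g hf η hη => ?_
  obtain ⟨t₀, ht₀, norm_g⟩ : ∃ t ∈ Γ, ‖(g : C(K, ℂ)) t‖ = ‖g‖ := hΓ g g.2
  set z := (g : C(K, ℂ)) t₀
  obtain ⟨b, norm_b, opposite⟩ := exists_norm_eq_one_norm_sub_eq_add_one z
  have V_open : IsOpen {t | ‖(g : C(K, ℂ)) t - z‖ < η / 2} :=
    isOpen_lt (by fun_prop) continuous_const
  refine (hΓ.frequently_near_value hA hdense hperfect V_open ⟨t₀, ht₀, by simpa [z] using hη⟩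
    hf (half_pos hη) norm_b.le).mono ?_
  rintro k ⟨norm_k, t, g_near, k_near⟩
  refine ⟨by linarith, ?_⟩
  calc ‖g‖ + 1 - η = ‖z - b‖ - η := by rw [opposite, norm_g]
    _ ≤ ‖(g : C(K, ℂ)) t - (k : C(K, ℂ)) t‖ := by
      have triangle₁ := norm_sub_le_norm_sub_add_norm_sub z ((g : C(K, ℂ)) t) b
      have triangle₂ :=
        norm_sub_le_norm_sub_add_norm_sub ((g : C(K, ℂ)) t) ((k : C(K, ℂ)) t) b
      rw [norm_sub_rev z ((g : C(K, ℂ)) t)] at triangle₁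
      have : ‖(g : C(K, ℂ)) t - z‖ < η / 2 := g_near
      linarith
    _ ≤ ‖g - k‖ := norm_subalgebra_apply_le (g - k) t

end NoIsolatedPoints

section IsolatedPoint

variable {K : Type*} [TopologicalSpace K] [CompactSpace K] {A : Subalgebra ℂ C(K, ℂ)} {Γ : Set K}

theorem exists_isBump_of_isolated (hA : IsClosed (A : Set C(K, ℂ)))
    (hdense : Γ ⊆ closure {t | t ∈ Γ ∧ IsStrongBoundaryPoint A t}) {t₀ : K} (ht₀ : t₀ ∈ Γ)
    (isolated : t₀ ∉ closure (Γ \ {t₀})) {ε : ℝ} (hε : 0 < ε) :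
    ∃ p : A, IsBump (p : C(K, ℂ)) t₀ (Γ \ {t₀})ᶜ ε := by
  obtain ⟨p, t, ⟨htΓ, ht⟩, hp⟩ := exists_isBump_of_inter_nonempty hA hdense
    isClosed_closure.isOpen_compl ⟨t₀, ht₀, isolated⟩ hε
  obtain rfl : t = t₀ := by
    by_contra hne
    exact ht (subset_closure ⟨htΓ, hne⟩)
  exact ⟨p, hp.mono (Set.compl_subset_compl.2 subset_closure) le_rfl⟩

theorem IsBump.norm_eq_one {p : A} {t₀ : K} {U : Set K} {ε : ℝ}
    (hp : IsBump (p : C(K, ℂ)) t₀ U ε) : ‖p‖ = 1 := by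
  have : Nonempty K := ⟨t₀⟩
  refine le_antisymm ((ContinuousMap.norm_le_of_nonempty _).2 hp.norm_apply_le_one) ?_
  have := norm_subalgebra_apply_le p t₀
  rwa [hp.apply_eq_one, norm_one] at this

/-- Evaluation at `t` as a bounded functional on the subalgebra `A`. -/
noncomputable def subalgebraEvalCLM (A : Subalgebra ℂ C(K, ℂ)) (t : K) : A →L[ℂ] ℂ :=
  (ContinuousMap.evalCLM ℂ t).comp A.toSubmodule.subtypeL

theorem norm_subalgebraEvalCLM (t : K) : ‖subalgebraEvalCLM A t‖ = 1 := by
  have : Nonempty K := ⟨t⟩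
  refine le_antisymm (ContinuousLinearMap.opNorm_le_bound _ zero_le_one fun f => ?_) ?_
  · exact (norm_subalgebra_apply_le f t).trans_eq (one_mul _).symm
  · have norm_one_le : ‖(1 : A)‖ ≤ 1 :=
      (ContinuousMap.norm_le_of_nonempty _).2 fun s => norm_one.le
    calc (1 : ℝ) = ‖subalgebraEvalCLM A t 1‖ := norm_one.symm
      _ ≤ ‖subalgebraEvalCLM A t‖ := ContinuousLinearMap.unit_le_opNorm _ _ norm_one_le

theorem norm_one_sub_le_one_of_half_le_re {z : ℂ} (hz : ‖z‖ ≤ 1) (hre : 1 / 2 ≤ z.re) :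
    ‖1 - z‖ ≤ 1 := by
  have norm_sq_le : ‖z‖ ^ 2 ≤ 1 := pow_le_one₀ (norm_nonneg z) hz
  have expand : ‖1 - z‖ ^ 2 = 1 - 2 * z.re + ‖z‖ ^ 2 := by
    simp only [Complex.sq_norm, Complex.normSq_apply, Complex.sub_re, Complex.sub_im,
      Complex.one_re, Complex.one_im]
    ring
  exact le_of_sq_le_sq (by linarith) zero_le_one

theorem HasDiametralLocalDiameterTwoProperty.mem_closure_diff_singleton
    (h : HasDiametralLocalDiameterTwoProperty ℂ A) (hΓ : IsBoundary A Γ)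
    (hA : IsClosed (A : Set C(K, ℂ)))
    (hdense : Γ ⊆ closure {t | t ∈ Γ ∧ IsStrongBoundaryPoint A t}) {t₀ : K} (ht₀ : t₀ ∈ Γ) :
    t₀ ∈ closure (Γ \ {t₀}) := by
  by_contra isolated
  obtain ⟨p, hp⟩ := exists_isBump_of_isolated hA hdense ht₀ isolated
    (by norm_num : (0 : ℝ) < 1 / 4)
  have eval_p : subalgebraEvalCLM A t₀ p = 1 := hp.apply_eq_one
  obtain ⟨g, hg, hg_slice, far⟩ := h (subalgebraEvalCLM A t₀) (norm_subalgebraEvalCLM t₀) (1 / 2)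
    one_half_pos p hp.norm_eq_one.le (by rw [eval_p]; norm_num) hp.norm_eq_one (1 / 2) one_half_pos
  have near : ‖p - g‖ ≤ 5 / 4 := by
    refine hΓ.norm_le fun t ht => ?_
    change ‖(p : C(K, ℂ)) t - (g : C(K, ℂ)) t‖ ≤ 5 / 4
    have norm_g_apply := (norm_subalgebra_apply_le g t).trans hg
    by_cases htt₀ : t = t₀
    · subst htt₀
      have re_gt : 1 - 1 / 2 < ((g : C(K, ℂ)) t).re := hg_slice
      rw [hp.apply_eq_one]
      linarith [norm_one_sub_le_one_of_half_le_re norm_g_apply (by linarith)]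
    · have norm_p_apply := hp.norm_apply_le t (not_not.2 ⟨ht, htt₀⟩)
      linarith [norm_sub_le ((p : C(K, ℂ)) t) ((g : C(K, ℂ)) t)]
  linarith

end IsolatedPoint

theorem stmt_17_general {K : Type*} [TopologicalSpace K] [CompactSpace K] [T2Space K]
    (A : Subalgebra ℂ C(K, ℂ)) (hA : IsClosed (A : Set C(K, ℂ)))
    (Γ : Set K) (hΓ : IsBoundary A Γ)
    (hdense : Γ ⊆ closure {t | t ∈ Γ ∧ IsStrongBoundaryPoint A t}) :
    (HasDaugavetProperty ℂ A ↔ ∀ t ∈ Γ, t ∈ closure (Γ \ {t})) ∧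
    (HasDiametralDiameterTwoProperty ℂ A ↔ ∀ t ∈ Γ, t ∈ closure (Γ \ {t})) ∧
    (HasDiametralLocalDiameterTwoProperty ℂ A ↔ ∀ t ∈ Γ, t ∈ closure (Γ \ {t})) := by
  have no_isolated (h : HasDiametralLocalDiameterTwoProperty ℂ A) :
      ∀ t ∈ Γ, t ∈ closure (Γ \ {t}) :=
    fun _ ht => h.mem_closure_diff_singleton hΓ hA hdense ht
  have far (hperfect : ∀ t ∈ Γ, t ∈ closure (Γ \ {t})) : HasFarWeakApproximants ℂ A :=
    hΓ.hasFarWeakApproximants hA hdense hperfect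
  exact
    ⟨⟨fun h => no_isolated h.hasDiametralLocalDiameterTwoProperty,
      fun h => (far h).hasDaugavetProperty⟩,
    ⟨fun h => no_isolated h.hasDiametralLocalDiameterTwoProperty,
      fun h => (far h).hasDiametralDiameterTwoProperty⟩,
    ⟨no_isolated, fun h =>
      (far h).hasDiametralDiameterTwoProperty.hasDiametralLocalDiameterTwoProperty⟩⟩

/- STATEMENT 17: Let `A` be a uniform algebra on a compact Hausdorff space `K` and
`Γ` a closed boundary for `A` in which the strong boundary points of `A` are dense.
Then the following are equivalent:
(i) `A` has the Daugavet property (rank-one operators `T = ψ(·) • g`, `ψ ≠ 0`,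
    `g ≠ 0`, satisfy `‖I + T‖ = 1 + ‖T‖`);
(ii) `A` has the diametral diameter two property;
(iii) `A` has the diametral local diameter two property;
(iv) `Γ` has no isolated points.
(Formalized as: each of (i), (ii), (iii) is equivalent to (iv).) -/
theorem stmt_17 {K : Type*} [TopologicalSpace K] [CompactSpace K] [T2Space K]
    (A : Subalgebra ℂ C(K, ℂ)) (hAclosed : IsClosed (A : Set C(K, ℂ)))
    (hAsep : ∀ s t : K, s ≠ t → ∃ g ∈ A, g s ≠ g t)
    (Γ : Set K) (hΓclosed : IsClosed Γ)
    (hΓbd : ∀ g ∈ A, ∃ t ∈ Γ, ‖g t‖ = ‖g‖)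
    (hΓdense : Γ ⊆ closure {t | t ∈ Γ ∧ IsStrongBoundaryPoint A t}) :
    ((∀ (ψ : A →L[ℂ] ℂ) (g : A), ψ ≠ 0 → g ≠ 0 →
        ‖ContinuousLinearMap.id ℂ A + ψ.smulRight g‖ = 1 + ‖ψ.smulRight g‖) ↔
      (∀ t ∈ Γ, t ∈ closure (Γ \ {t}))) ∧
    ((∀ W : Set (WeakSpace ℂ A), IsOpen W →
        ∀ f ∈ (⇑(toWeakSpace ℂ A) ⁻¹' W) ∩ Metric.closedBall (0 : A) 1, ‖f‖ = 1 →
          ∀ ε > (0 : ℝ),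
            ∃ g ∈ (⇑(toWeakSpace ℂ A) ⁻¹' W) ∩ Metric.closedBall (0 : A) 1,
              2 - ε ≤ ‖f - g‖) ↔
      (∀ t ∈ Γ, t ∈ closure (Γ \ {t}))) ∧
    ((∀ ψ : A →L[ℂ] ℂ, ‖ψ‖ = 1 → ∀ δ > (0 : ℝ),
        ∀ f : A, ‖f‖ ≤ 1 → 1 - δ < (ψ f).re → ‖f‖ = 1 →
          ∀ ε > (0 : ℝ),
            ∃ g : A, ‖g‖ ≤ 1 ∧ 1 - δ < (ψ g).re ∧ 2 - ε ≤ ‖f - g‖) ↔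
      (∀ t ∈ Γ, t ∈ closure (Γ \ {t}))) :=
  stmt_17_general A hAclosed Γ hΓbd hΓdense
end
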